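/- arXiv:1301.1735 — 3 statements merged into one kernel-verified Lean document; each statement's English description precedes it below -/
import Mathlib

section
/- For every u with 0 < u < 1, ∫_0^{√u} K(k) / (√(1−k²) √(u−k²)) dk = ∫_0^1 k K(k) / (√(1−k²) √(1−k²u)) dk = (1/(1+√u)) · [K(√(2√u/(1+√u)))]². -/
open Real MeasureTheory intervalIntegral Filter Topology

/-- Complete elliptic integral of the first kind. -/
noncomputable def ellipticK (k : ℝ) : ℝ :=
  ∫ θ in (0:ℝ)..(π/2), 1 / Real.sqrt (1 - k^2 * Real.sin θ ^ 2)

/-!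
All three quantities equal `∫ dφ dθ / √(1 - u + u cos² φ cos² θ)` over `[0, π/2]²`. The first is
this integral after the substitution `k = √u cos φ / √(1 - u sin² φ)`. The second, with
`k = √(1 - z²)`, becomes the integral over an octant of the unit sphere of a function of two
coordinates; changing the polar axis of the spherical coordinates gives the double integral.

For the square, put `s = √u`. The integral over `[0, 2π]²` of the inverse square root of a kernel
affine in `(cos b, sin b)` and in `(cos w, sin w)` is evaluated in two orders: integrating over `w`
first separates the variables and gives the square, while integrating over `b` first gives, by
Landen's transformation, the double integral again.
-/

/-! ### Quarter periods and Landen's transformation -/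

lemma integral_eq_two_mul_integral_half_of_sub_eq {f : ℝ → ℝ} {c : ℝ} (hf : ∀ x, f (c - x) = f x) :
    ∫ x in 0..c, f x = 2 * ∫ x in 0..c / 2, f x := by
  have hmid : c - c / 2 = c / 2 := sub_half c
  by_cases hint : IntervalIntegrable f volume 0 (c / 2)
  · have hint' : IntervalIntegrable f volume (c / 2) c := by
      simpa only [sub_zero, hmid, hf] using (hint.comp_sub_left c).symm
    have hrefl : ∫ x in 0..c / 2, f x = ∫ x in c / 2..c, f x := by
      simpa only [sub_zero, hmid, hf] using integral_comp_sub_left (a := 0) (b := c / 2) f c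
    rw [← integral_add_adjacent_intervals hint hint', ← hrefl, two_mul]
  · have hmem : c / 2 ∈ Set.uIcc 0 c := by
      rcases le_total 0 c with h | h
      · exact Set.mem_uIcc_of_le (by linarith) (by linarith)
      · exact Set.mem_uIcc_of_ge (by linarith) (by linarith)
    have hint' : ¬IntervalIntegrable f volume 0 c := fun h ↦
      hint (h.mono_set (Set.uIcc_subset_uIcc_left hmem))
    rw [integral_undef hint, integral_undef hint', mul_zero]

lemma integral_zero_two_pi_comp_cos (g : ℝ → ℝ) :
    ∫ x in 0..2 * π, g (cos x) = 4 * ∫ x in 0..π / 2, g (2 * cos x ^ 2 - 1) := by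
  have hscale := mul_integral_comp_mul_left (a := 0) (b := π) (f := fun x ↦ g (cos x)) 2
  have hhalf := integral_eq_two_mul_integral_half_of_sub_eq (c := π)
    (f := fun x ↦ g (2 * cos x ^ 2 - 1)) fun x ↦ by rw [cos_pi_sub, neg_sq]
  simp only [cos_two_mul, mul_zero] at hscale
  rw [← hscale, hhalf]
  ring

lemma integral_zero_two_pi_comp_add_cos_add_sin (g : ℝ → ℝ) {A B C ρ : ℝ} (hρ : 0 ≤ ρ)
    (h : B ^ 2 + C ^ 2 = ρ ^ 2) :
    ∫ x in 0..2 * π, g (A + B * cos x + C * sin x) = ∫ x in 0..2 * π, g (A + ρ * cos x) := by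
  obtain ⟨α, hB, hC⟩ : ∃ α, ρ * cos α = B ∧ ρ * sin α = C := by
    have hnorm : ‖(⟨B, C⟩ : ℂ)‖ = ρ := by
      rw [Complex.norm_def, Complex.normSq_mk, ← sq, ← sq, h, sqrt_sq hρ]
    exact ⟨_, hnorm ▸ Complex.norm_mul_cos_arg _, hnorm ▸ Complex.norm_mul_sin_arg _⟩
  have hphase x : A + B * cos x + C * sin x = A + ρ * cos (x - α) := by
    rw [cos_sub, ← hB, ← hC]; ring
  have hper : Function.Periodic (fun x ↦ g (A + ρ * cos x)) (2 * π) := fun x ↦ by simp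
  simp only [hphase]
  rw [integral_comp_sub_right (fun x ↦ g (A + ρ * cos x)) α]
  simpa [sub_eq_neg_add] using hper.intervalIntegral_add_eq (0 - α) 0

/-- The integral `∫₀^{π/2} dx / √(p cos² x + q sin² x)`. For `p = a²` and `q = b²` it is
`π / (2 M(a, b))`, where `M` is the arithmetic-geometric mean; taking the squares as parameters
keeps square roots out of the arguments. -/
noncomputable def quarterPeriod (p q : ℝ) : ℝ :=
  ∫ x in 0..π / 2, (√(p * cos x ^ 2 + q * sin x ^ 2))⁻¹

lemma mul_cos_sq_add_mul_sin_sq_pos {p q : ℝ} (hp : 0 < p) (hq : 0 < q) (x : ℝ) :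
    0 < p * cos x ^ 2 + q * sin x ^ 2 := by
  rcases le_total p q with h | h <;>
    nlinarith [sin_sq_add_cos_sq x, sq_nonneg (sin x), sq_nonneg (cos x)]

lemma continuous_inv_sqrt_mul_cos_sq_add_mul_sin_sq {p q : ℝ} (hp : 0 < p) (hq : 0 < q) :
    Continuous fun x ↦ (√(p * cos x ^ 2 + q * sin x ^ 2))⁻¹ :=
  Continuous.inv₀ (by fun_prop) fun x ↦ (sqrt_pos.2 (mul_cos_sq_add_mul_sin_sq_pos hp hq x)).ne'

lemma quarterPeriod_nonneg (p q : ℝ) : 0 ≤ quarterPeriod p q :=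
  integral_nonneg (by positivity) fun _ _ ↦ by positivity

lemma quarterPeriod_comm (p q : ℝ) : quarterPeriod p q = quarterPeriod q p := by
  have hrefl := integral_comp_sub_left (a := 0) (b := π / 2)
    (fun x ↦ (√(p * cos x ^ 2 + q * sin x ^ 2))⁻¹) (π / 2)
  simp only [cos_pi_div_two_sub, sin_pi_div_two_sub, sub_self, sub_zero] at hrefl
  simp only [quarterPeriod, ← hrefl, add_comm]

lemma quarterPeriod_mul_left {r : ℝ} (hr : 0 ≤ r) (p q : ℝ) :
    quarterPeriod (r * p) (r * q) = (√r)⁻¹ * quarterPeriod p q := by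
  simp only [quarterPeriod, mul_assoc, ← mul_add, sqrt_mul hr, mul_inv]
  exact integral_const_mul _ _

lemma ellipticK_eq_quarterPeriod (k : ℝ) : ellipticK k = quarterPeriod 1 (1 - k ^ 2) := by
  simp only [ellipticK, quarterPeriod, one_div]
  congr! 4 with x
  linear_combination -sin_sq_add_cos_sq x

lemma integral_inv_sqrt_add_cos_add_sin {A B C ρ : ℝ} (hρ : 0 ≤ ρ) (h : B ^ 2 + C ^ 2 = ρ ^ 2) :
    ∫ x in 0..2 * π, (√(A + B * cos x + C * sin x))⁻¹ = 4 * quarterPeriod (A + ρ) (A - ρ) := by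
  rw [integral_zero_two_pi_comp_add_cos_add_sin (fun y ↦ (√y)⁻¹) hρ h,
    integral_zero_two_pi_comp_cos fun y ↦ (√(A + ρ * y))⁻¹, quarterPeriod]
  congr! 5 with x
  linear_combination (ρ - A) * sin_sq_add_cos_sq x

lemma hasDerivAt_arg_comp {γ : ℝ → ℂ} {γ' : ℂ} {x : ℝ} (hγ : HasDerivAt γ γ' x)
    (hx : γ x ∈ Complex.slitPlane) :
    HasDerivAt (fun t ↦ (γ t).arg) (γ' / γ x).im x := by
  simpa [Function.comp_def, Complex.log_im] using
    Complex.imCLM.hasFDerivAt.comp_hasDerivAt x (hγ.clog_real hx)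

/-- Landen's substitution `ψ(x) = x + arg (a cos x + i b sin x)`, increasing from `0` to `π` on
`[0, π/2]`. -/
noncomputable def landenAngle (a b x : ℝ) : ℝ :=
  x + Complex.arg ⟨a * cos x, b * sin x⟩

section Landen

variable {a b : ℝ}

lemma landenAngle_zero (ha : 0 < a) : landenAngle a b 0 = 0 := by
  have harg : Complex.arg ⟨a, 0⟩ = 0 := Complex.arg_ofReal_of_nonneg ha.le
  simp [landenAngle, harg]

lemma landenAngle_pi_div_two (hb : 0 < b) : landenAngle a b (π / 2) = π := by
  have harg : Complex.arg ⟨0, b⟩ = π / 2 := by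
    simpa using Complex.arg_eq_pi_div_two_iff.2 ⟨rfl, hb⟩
  simp [landenAngle, harg]

lemma hasDerivAt_landenAngle (ha : 0 < a) (hb : 0 < b) {x : ℝ} (hx : x ∈ Set.Icc 0 (π / 2)) :
    HasDerivAt (landenAngle a b) (1 + a * b / (a ^ 2 * cos x ^ 2 + b ^ 2 * sin x ^ 2)) x := by
  have hγ : HasDerivAt (fun t ↦ (⟨a * cos t, b * sin t⟩ : ℂ)) ⟨a * -sin x, b * cos x⟩ x := by
    simp only [Complex.mk_eq_add_mul_I]
    exact ((hasDerivAt_cos x).const_mul a).ofReal_comp.add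
      (((hasDerivAt_sin x).const_mul b).ofReal_comp.mul_const Complex.I)
  have hslit : (⟨a * cos x, b * sin x⟩ : ℂ) ∈ Complex.slitPlane := by
    rcases hx.2.lt_or_eq with hlt | rfl
    · exact .inl (mul_pos ha (cos_pos_of_mem_Ioo ⟨by linarith [hx.1, pi_pos], hlt⟩))
    · exact .inr (by simpa using hb.ne')
  refine ((hasDerivAt_id x).add (hasDerivAt_arg_comp hγ hslit)).congr_deriv ?_
  rw [Complex.div_im, Complex.normSq_mk, ← sub_div, ← sq, ← sq, mul_pow, mul_pow]
  congr 2
  linear_combination a * b * sin_sq_add_cos_sq x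

lemma sin_landenAngle_sq (ha : 0 < a) (hb : 0 < b) (x : ℝ) :
    sin (landenAngle a b x) ^ 2 =
      ((a + b) * sin x * cos x) ^ 2 / (a ^ 2 * cos x ^ 2 + b ^ 2 * sin x ^ 2) := by
  set z : ℂ := ⟨a * cos x, b * sin x⟩ with hz
  have hnorm : ‖z‖ ^ 2 = a ^ 2 * cos x ^ 2 + b ^ 2 * sin x ^ 2 := by
    rw [Complex.sq_norm, Complex.normSq_mk]; ring
  have hsin : ‖z‖ * sin (landenAngle a b x) = (a + b) * sin x * cos x := by
    rw [landenAngle, ← hz, sin_add]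
    linear_combination sin x * Complex.norm_mul_cos_arg z + cos x * Complex.norm_mul_sin_arg z
  rw [eq_div_iff (mul_cos_sq_add_mul_sin_sq_pos (pow_pos ha 2) (pow_pos hb 2) x).ne', ← hnorm,
    ← hsin]
  ring

lemma landenAngle_quadratic_form (ha : 0 < a) (hb : 0 < b) (x : ℝ) :
    ((a + b) / 2) ^ 2 * cos (landenAngle a b x) ^ 2 + a * b * sin (landenAngle a b x) ^ 2 =
      ((a + b) / 2 * (a * cos x ^ 2 + b * sin x ^ 2)) ^ 2 /
        (a ^ 2 * cos x ^ 2 + b ^ 2 * sin x ^ 2) := by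
  have hD := (mul_cos_sq_add_mul_sin_sq_pos (pow_pos ha 2) (pow_pos hb 2) x).ne'
  rw [cos_sq', sin_landenAngle_sq ha hb]
  field_simp
  rw [sin_sq]
  ring

lemma quarterPeriod_landen (ha : 0 < a) (hb : 0 < b) :
    quarterPeriod (a ^ 2) (b ^ 2) = quarterPeriod (((a + b) / 2) ^ 2) (a * b) := by
  have hD x := mul_cos_sq_add_mul_sin_sq_pos (pow_pos ha 2) (pow_pos hb 2) x
  let F (y : ℝ) := (√(((a + b) / 2) ^ 2 * cos y ^ 2 + a * b * sin y ^ 2))⁻¹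
  have hF : Continuous F :=
    continuous_inv_sqrt_mul_cos_sq_add_mul_sin_sq (by positivity) (by positivity)
  have hsubst := integral_comp_mul_deriv (a := 0) (b := π / 2) (f := landenAngle a b)
    (fun x hx ↦ hasDerivAt_landenAngle ha hb (by rwa [Set.uIcc_of_le (by positivity)] at hx))
    (continuous_const.add (continuous_const.div (by fun_prop) fun x ↦ (hD x).ne')).continuousOn hF
  rw [landenAngle_zero ha, landenAngle_pi_div_two hb,
    integral_eq_two_mul_integral_half_of_sub_eq (f := F) fun x ↦ by simp [F]] at hsubst
  refine mul_left_cancel₀ two_ne_zero (Eq.trans ?_ hsubst)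
  rw [quarterPeriod, ← intervalIntegral.integral_const_mul]
  refine integral_congr fun x _ ↦ ?_
  have hM := mul_cos_sq_add_mul_sin_sq_pos ha hb x
  have hsqrt := sqrt_pos.2 (hD x)
  have hderiv : 1 + a * b / (a ^ 2 * cos x ^ 2 + b ^ 2 * sin x ^ 2) =
      (a + b) * (a * cos x ^ 2 + b * sin x ^ 2) / √(a ^ 2 * cos x ^ 2 + b ^ 2 * sin x ^ 2) ^ 2 := by
    rw [sq_sqrt (hD x).le, eq_div_iff (hD x).ne', one_add_mul, div_mul_cancel₀ _ (hD x).ne']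
    linear_combination (-a * b) * sin_sq_add_cos_sq x
  simp only [Function.comp_apply, F]
  rw [landenAngle_quadratic_form ha hb, sqrt_div (sq_nonneg _), sqrt_sq (by positivity), hderiv]
  field_simp

end Landen

lemma integral_inv_sqrt_add_cos_add_sin_of_discrim {A B C c : ℝ} (hA : 0 < A) (hc : 0 < c)
    (h : B ^ 2 + C ^ 2 + c ^ 2 = A ^ 2) :
    ∫ x in 0..2 * π, (√(A + B * cos x + C * sin x))⁻¹ = 4 * quarterPeriod ((A + c) / 2) c := by
  set ρ := √(B ^ 2 + C ^ 2)
  have hρ : ρ ^ 2 = B ^ 2 + C ^ 2 := sq_sqrt (by positivity)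
  have hρA : |ρ| < A := abs_lt_of_sq_lt_sq (by nlinarith) hA.le
  have hadd : 0 < A + ρ := by linarith [neg_lt_of_abs_lt hρA]
  have hsub : 0 < A - ρ := by linarith [lt_of_abs_lt hρA]
  have hprod : √(A + ρ) * √(A - ρ) = c := by
    rw [← sqrt_mul hadd.le, show (A + ρ) * (A - ρ) = c ^ 2 by linear_combination -hρ - h,
      sqrt_sq hc.le]
  have hmean : ((√(A + ρ) + √(A - ρ)) / 2) ^ 2 = (A + c) / 2 := by
    linear_combination (sq_sqrt hadd.le + sq_sqrt hsub.le) / 4 + hprod / 2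
  have hlanden := quarterPeriod_landen (sqrt_pos.2 hadd) (sqrt_pos.2 hsub)
  rw [sq_sqrt hadd.le, sq_sqrt hsub.le, hprod, hmean] at hlanden
  rw [integral_inv_sqrt_add_cos_add_sin (sqrt_nonneg _) hρ.symm, hlanden]

/-! ### The square as a double integral -/

lemma add_mul_cos_add_mul_sin_pos {A B C : ℝ} (hA : 0 < A) (h : B ^ 2 + C ^ 2 < A ^ 2) (x : ℝ) :
    0 < A + B * cos x + C * sin x := by
  have hsq : (B * cos x + C * sin x) ^ 2 < A ^ 2 := by
    refine lt_of_le_of_lt ?_ h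
    nlinarith [sq_nonneg (B * sin x - C * cos x), sin_sq_add_cos_sq x]
  linarith [neg_lt_of_abs_lt (abs_lt_of_sq_lt_sq hsq hA.le)]

/-- The kernel of the double integral expressing `quarterPeriod (1 + s) (1 - s) ^ 2`: affine in
`(cos w, sin w)` with mean `1 - s cos b` and amplitude `s (1 - s cos b)`, and affine in
`(cos b, sin b)` with mean² - amplitude² equal to `(1 - s ^ 2) ^ 2`. -/
noncomputable def trigBiform (s b w : ℝ) : ℝ :=
  (1 - s * cos b) + s * (s - cos b) * cos w + -(s * √(1 - s ^ 2) * sin b) * sin w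

section TrigBiform

variable {s : ℝ}

lemma trigBiform_amplitude_sq (hs : s ^ 2 ≤ 1) (b : ℝ) :
    (s * (s - cos b)) ^ 2 + (-(s * √(1 - s ^ 2) * sin b)) ^ 2 = (s * (1 - s * cos b)) ^ 2 := by
  linear_combination s ^ 2 * sin b ^ 2 * sq_sqrt (sub_nonneg.2 hs) +
    s ^ 2 * (1 - s ^ 2) * sin_sq_add_cos_sq b

lemma one_sub_mul_cos_pos (hs : |s| < 1) (b : ℝ) : 0 < 1 - s * cos b := by
  have hcos := abs_mul s (cos b) ▸ mul_le_of_le_one_right (abs_nonneg s) (abs_cos_le_one b)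
  linarith [le_abs_self (s * cos b)]

lemma trigBiform_pos (hs : |s| < 1) (b w : ℝ) : 0 < trigBiform s b w := by
  have hs2 : s ^ 2 < 1 := (sq_lt_one_iff_abs_lt_one s).2 hs
  refine add_mul_cos_add_mul_sin_pos (one_sub_mul_cos_pos hs b) ?_ w
  rw [trigBiform_amplitude_sq hs2.le, mul_pow]
  exact mul_lt_of_lt_one_left (pow_pos (one_sub_mul_cos_pos hs b) 2) hs2

lemma integral_inv_sqrt_trigBiform_right (hs : 0 ≤ s) (hs1 : s < 1) (b : ℝ) :
    ∫ w in 0..2 * π, (√(trigBiform s b w))⁻¹ =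
      (√(1 - s * cos b))⁻¹ * (4 * quarterPeriod (1 + s) (1 - s)) := by
  have hA := one_sub_mul_cos_pos (abs_lt.2 ⟨by linarith, hs1⟩) b
  unfold trigBiform
  rw [integral_inv_sqrt_add_cos_add_sin (mul_nonneg hs hA.le)
    (trigBiform_amplitude_sq (by nlinarith) b), mul_left_comm, ← quarterPeriod_mul_left hA.le]
  ring_nf

lemma integral_inv_sqrt_trigBiform_left (hs : |s| < 1) (w : ℝ) :
    ∫ b in 0..2 * π, (√(trigBiform s b w))⁻¹ =
      4 * quarterPeriod (1 - s ^ 2 * ((1 - cos w) / 2)) (1 - s ^ 2) := by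
  have hs2 : 0 < 1 - s ^ 2 := sub_pos.2 ((sq_lt_one_iff_abs_lt_one s).2 hs)
  have hmean : 0 < 1 + s ^ 2 * cos w := by nlinarith [neg_one_le_cos w]
  have hbiform b : trigBiform s b w = (1 + s ^ 2 * cos w) + -(s * (1 + cos w)) * cos b +
      -(s * √(1 - s ^ 2) * sin w) * sin b := by
    rw [trigBiform]; ring
  simp only [hbiform]
  rw [integral_inv_sqrt_add_cos_add_sin_of_discrim hmean hs2]
  · ring_nf
  · linear_combination s ^ 2 * sin w ^ 2 * sq_sqrt hs2.le +
      s ^ 2 * (1 - s ^ 2) * sin_sq_add_cos_sq w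

lemma integral_inv_sqrt_trigBiform_swap (hs : |s| < 1) :
    ∫ b in 0..2 * π, ∫ w in 0..2 * π, (√(trigBiform s b w))⁻¹ =
      ∫ w in 0..2 * π, ∫ b in 0..2 * π, (√(trigBiform s b w))⁻¹ := by
  have hcont : Continuous (Function.uncurry fun b w ↦ (√(trigBiform s b w))⁻¹) :=
    Continuous.inv₀ (by unfold trigBiform; fun_prop) fun p ↦
      (sqrt_pos.2 (trigBiform_pos hs _ _)).ne'
  exact intervalIntegral_intervalIntegral_swap <|
    (hcont.continuousOn.integrableOn_compact (isCompact_uIcc.prod isCompact_uIcc)).mono_set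
      (Set.prod_mono Set.uIoc_subset_uIcc Set.uIoc_subset_uIcc)

lemma quarterPeriod_sq_eq_integral (hs : 0 ≤ s) (hs1 : s < 1) :
    quarterPeriod (1 + s) (1 - s) ^ 2 =
      ∫ φ in 0..π / 2, quarterPeriod (1 - s ^ 2 * sin φ ^ 2) (1 - s ^ 2) := by
  have habs : |s| < 1 := abs_lt.2 ⟨by linarith, hs1⟩
  have hsingle : ∫ b in 0..2 * π, (√(1 - s * cos b))⁻¹ = 4 * quarterPeriod (1 + s) (1 - s) := by
    simpa [← sub_eq_add_neg] using
      integral_inv_sqrt_add_cos_add_sin (A := 1) (B := -s) (C := 0) hs (by ring)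
  have hsquare : ∫ b in 0..2 * π, ∫ w in 0..2 * π, (√(trigBiform s b w))⁻¹ =
      16 * quarterPeriod (1 + s) (1 - s) ^ 2 := by
    simp only [integral_inv_sqrt_trigBiform_right hs hs1, intervalIntegral.integral_mul_const,
      hsingle]
    ring
  have hiterated : ∫ w in 0..2 * π, ∫ b in 0..2 * π, (√(trigBiform s b w))⁻¹ =
      16 * ∫ φ in 0..π / 2, quarterPeriod (1 - s ^ 2 * sin φ ^ 2) (1 - s ^ 2) := by
    simp only [integral_inv_sqrt_trigBiform_left habs, intervalIntegral.integral_const_mul]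
    rw [integral_zero_two_pi_comp_cos fun y ↦
      quarterPeriod (1 - s ^ 2 * ((1 - y) / 2)) (1 - s ^ 2), ← mul_assoc]
    congr! 4 with φ
    · norm_num
    · rw [sin_sq]; ring
  linarith [integral_inv_sqrt_trigBiform_swap habs]

end TrigBiform

lemma ellipticK_sq_eq_integral {s : ℝ} (hs : 0 ≤ s) (hs1 : s < 1) :
    1 / (1 + s) * ellipticK (√(2 * s / (1 + s))) ^ 2 =
      ∫ φ in 0..π / 2, quarterPeriod (1 - s ^ 2 * sin φ ^ 2) (1 - s ^ 2) := by
  have hK : quarterPeriod (1 + s) (1 - s) =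
      (√(1 + s))⁻¹ * ellipticK (√(2 * s / (1 + s))) := by
    rw [ellipticK_eq_quarterPeriod, ← quarterPeriod_mul_left (by positivity),
      sq_sqrt (by positivity)]
    congr 1 <;> field_simp
    ring
  rw [← quarterPeriod_sq_eq_integral hs hs1, hK, mul_pow, inv_pow, sq_sqrt (by positivity),
    one_div]

/-! ### The integral over `[0, √u]` -/

lemma integral_comp_of_deriv_nonpos {f g g' : ℝ → ℝ} {a b : ℝ} (hab : a ≤ b)
    (hg : ContinuousOn g (Set.Icc a b)) (hg' : ∀ x ∈ Set.Ioo a b, HasDerivAt g (g' x) x)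
    (hneg : ∀ x ∈ Set.Ioo a b, g' x ≤ 0) :
    ∫ y in g b..g a, f y = ∫ x in a..b, -g' x * f (g x) := by
  have hanti : AntitoneOn g (Set.Icc a b) := by
    refine antitoneOn_of_deriv_nonpos (convex_Icc a b) hg ?_ ?_ <;> rw [interior_Icc]
    · exact fun x hx ↦ (hg' x hx).differentiableAt.differentiableWithinAt
    · exact fun x hx ↦ (hg' x hx).deriv.trans_le (hneg x hx)
  have hle : g b ≤ g a := hanti (Set.left_mem_Icc.2 hab) (Set.right_mem_Icc.2 hab) hab
  simp only [integral_of_le hle, integral_of_le hab, ← integral_Icc_eq_integral_Ioc, neg_mul,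
    MeasureTheory.integral_neg]
  exact (neg_eq_iff_eq_neg.2 (integral_Icc_deriv_smul_of_deriv_nonpos hg hg' hneg hab)).symm

/-- The substitution `k = √u cos φ / √(1 - u sin² φ)`, decreasing from `√u` to `0` on
`[0, π/2]`. -/
noncomputable def modulusOfAngle (u φ : ℝ) : ℝ :=
  √u * cos φ / √(1 - u * sin φ ^ 2)

lemma one_sub_mul_sin_sq_pos {u : ℝ} (hu : u < 1) (φ : ℝ) : 0 < 1 - u * sin φ ^ 2 := by
  linarith [mul_cos_sq_add_mul_sin_sq_pos one_pos (sub_pos.2 hu) φ, sin_sq_add_cos_sq φ]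

section ModulusOfAngle

variable {u : ℝ}

lemma one_sub_modulusOfAngle_sq (hu : 0 ≤ u) (hu1 : u < 1) (φ : ℝ) :
    1 - modulusOfAngle u φ ^ 2 = (1 - u) / (1 - u * sin φ ^ 2) := by
  have hD := one_sub_mul_sin_sq_pos hu1 φ
  rw [modulusOfAngle, div_pow, mul_pow, sq_sqrt hu, sq_sqrt hD.le, cos_sq']
  field_simp
  ring

lemma sub_modulusOfAngle_sq (hu : 0 ≤ u) (hu1 : u < 1) (φ : ℝ) :
    u - modulusOfAngle u φ ^ 2 = u * (1 - u) * sin φ ^ 2 / (1 - u * sin φ ^ 2) := by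
  have hD := one_sub_mul_sin_sq_pos hu1 φ
  rw [modulusOfAngle, div_pow, mul_pow, sq_sqrt hu, sq_sqrt hD.le, cos_sq']
  field_simp
  ring

lemma sqrt_mul_sqrt_modulusOfAngle (hu : 0 ≤ u) (hu1 : u < 1) {φ : ℝ} (hφ : 0 ≤ sin φ) :
    √(1 - modulusOfAngle u φ ^ 2) * √(u - modulusOfAngle u φ ^ 2) =
      √u * (1 - u) * sin φ / (1 - u * sin φ ^ 2) := by
  have hD := one_sub_mul_sin_sq_pos hu1 φ
  have h1u := sub_pos.2 hu1
  rw [one_sub_modulusOfAngle_sq hu hu1, sub_modulusOfAngle_sq hu hu1, ← sqrt_mul (by positivity),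
    sqrt_eq_iff_mul_self_eq (by positivity) (by positivity)]
  field_simp
  rw [sq_sqrt hu, mul_comm]

lemma hasDerivAt_modulusOfAngle (hu1 : u < 1) (φ : ℝ) :
    HasDerivAt (modulusOfAngle u)
      (-(√u * (1 - u) * sin φ / (1 - u * sin φ ^ 2) * (√(1 - u * sin φ ^ 2))⁻¹)) φ := by
  have hD := one_sub_mul_sin_sq_pos hu1 φ
  have hsqrt := sqrt_pos.2 hD
  have hderivD := (((hasDerivAt_sin φ).fun_pow 2).const_mul u).const_sub 1
  refine (((hasDerivAt_cos φ).const_mul √u).fun_div (hderivD.sqrt hD.ne') hsqrt.ne').congr_deriv ?_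
  have hsq := sq_sqrt hD.le
  set d := √(1 - u * sin φ ^ 2)
  rw [← hsq]
  field_simp
  simp only [Nat.cast_ofNat, Nat.add_one_sub_one, pow_one]
  linear_combination 2 * √u * sin φ * (u * sin_sq_add_cos_sq φ - hsq)

lemma inv_sqrt_mul_ellipticK_modulusOfAngle (hu : 0 ≤ u) (hu1 : u < 1) (φ : ℝ) :
    (√(1 - u * sin φ ^ 2))⁻¹ * ellipticK (modulusOfAngle u φ) =
      quarterPeriod (1 - u * sin φ ^ 2) (1 - u) := by
  have hD := one_sub_mul_sin_sq_pos hu1 φ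
  rw [ellipticK_eq_quarterPeriod, ← quarterPeriod_mul_left hD.le,
    one_sub_modulusOfAngle_sq hu hu1, mul_one, mul_div_cancel₀ _ hD.ne']

lemma integral_ellipticK_div_eq_integral (hu : 0 < u) (hu1 : u < 1) :
    ∫ k in 0..√u, ellipticK k / (√(1 - k ^ 2) * √(u - k ^ 2)) =
      ∫ φ in 0..π / 2, quarterPeriod (1 - u * sin φ ^ 2) (1 - u) := by
  have hsin {φ} (hφ : φ ∈ Set.Ioo 0 (π / 2)) : 0 < sin φ :=
    sin_pos_of_mem_Ioo ⟨hφ.1, by linarith [hφ.2, pi_pos]⟩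
  have hsubst := integral_comp_of_deriv_nonpos (a := 0) (b := π / 2)
    (f := fun k ↦ ellipticK k / (√(1 - k ^ 2) * √(u - k ^ 2))) (by positivity)
    (fun φ _ ↦ (hasDerivAt_modulusOfAngle hu1 φ).continuousAt.continuousWithinAt)
    (fun φ _ ↦ hasDerivAt_modulusOfAngle hu1 φ) fun φ hφ ↦ neg_nonpos.2 <| by
      have := hsin hφ
      have := one_sub_mul_sin_sq_pos hu1 φ
      positivity
  have hleft : modulusOfAngle u 0 = √u := by simp [modulusOfAngle]
  have hright : modulusOfAngle u (π / 2) = 0 := by simp [modulusOfAngle]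
  rw [hleft, hright] at hsubst
  rw [hsubst]
  refine integral_congr_Ioo_of_le (by positivity) fun φ hφ ↦ ?_
  have hJ : √u * (1 - u) * sin φ / (1 - u * sin φ ^ 2) ≠ 0 := by
    have := hsin hφ
    have := one_sub_mul_sin_sq_pos hu1 φ
    positivity
  rw [neg_neg, sqrt_mul_sqrt_modulusOfAngle hu.le hu1 (hsin hφ).le, mul_assoc, ← mul_div_assoc,
    mul_div_cancel₀ _ hJ, inv_sqrt_mul_ellipticK_modulusOfAngle hu.le hu1]

end ModulusOfAngle

/-! ### The integral over `[0, 1]` -/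

lemma measurable_uncurry_quarterPeriod : Measurable (Function.uncurry quarterPeriod) := by
  have hm : Measurable fun x : (ℝ × ℝ) × ℝ ↦
      (√(x.1.1 * cos x.2 ^ 2 + x.1.2 * sin x.2 ^ 2))⁻¹ := by fun_prop
  simp only [Function.uncurry_def, quarterPeriod, integral_of_le pi_div_two_pos.le]
  exact hm.stronglyMeasurable.integral_prod_right'.measurable

lemma ofReal_quarterPeriod {p q : ℝ} (hp : 0 < p) (hq : 0 < q) :
    ENNReal.ofReal (quarterPeriod p q) =
      ∫⁻ x in Set.Ioo 0 (π / 2), ENNReal.ofReal (√(p * cos x ^ 2 + q * sin x ^ 2))⁻¹ := by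
  have hint := (continuous_inv_sqrt_mul_cos_sq_add_mul_sin_sq hp hq).integrableOn_Icc
    (μ := volume) (a := 0) (b := π / 2)
  rw [quarterPeriod, integral_of_le pi_div_two_pos.le, integral_Ioc_eq_integral_Ioo,
    ofReal_integral_eq_lintegral_ofReal (hint.mono_set Set.Ioo_subset_Icc_self)
      (ae_of_all _ fun x ↦ by positivity)]

lemma image_mul_sin_Ioo {r : ℝ} (hr : 0 < r) :
    Set.image (fun θ ↦ r * sin θ) (Set.Ioo 0 (π / 2)) = Set.Ioo 0 r := by
  refine Set.Subset.antisymm ?_ ?_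
  · rintro _ ⟨θ, hθ, rfl⟩
    have hlt := sin_lt_sin_of_lt_of_le_pi_div_two (by linarith [hθ.1, pi_pos]) le_rfl hθ.2
    rw [sin_pi_div_two] at hlt
    exact ⟨mul_pos hr (sin_pos_of_mem_Ioo ⟨hθ.1, by linarith [hθ.2, pi_pos]⟩),
      mul_lt_of_lt_one_right hr hlt⟩
  · simpa using intermediate_value_Ioo pi_div_two_pos.le (f := fun θ ↦ r * sin θ) (by fun_prop)

lemma lintegral_Ioo_mul_inv_sqrt_sq_sub_sq {r R : ℝ} (hr : 0 < r) (hR : r ≤ R)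
    (f : ℝ → ENNReal) :
    ∫⁻ y in Set.Ioo 0 R, f y * ENNReal.ofReal (√(r ^ 2 - y ^ 2))⁻¹ =
      ∫⁻ θ in Set.Ioo 0 (π / 2), f (r * sin θ) := by
  -- The weight vanishes for `y ≥ r`, as `√` is `0` on negative numbers and `0⁻¹ = 0`.
  have htail : ∫⁻ y in Set.Ico r R, f y * ENNReal.ofReal (√(r ^ 2 - y ^ 2))⁻¹ = 0 := by
    refine setLIntegral_eq_zero measurableSet_Ico fun y hy ↦ ?_
    have hsqrt : √(r ^ 2 - y ^ 2) = 0 := sqrt_eq_zero_of_nonpos (by nlinarith [hy.1])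
    simp [hsqrt]
  have hdisj : Disjoint (Set.Ioo 0 r) (Set.Ico r R) :=
    Set.disjoint_left.2 fun y hy hy' ↦ hy.2.not_ge hy'.1
  have hcos {θ} (hθ : θ ∈ Set.Ioo 0 (π / 2)) : 0 < r * cos θ :=
    mul_pos hr (cos_pos_of_mem_Ioo ⟨by linarith [hθ.1, pi_pos], hθ.2⟩)
  have hinj : Set.InjOn (fun θ ↦ r * sin θ) (Set.Ioo 0 (π / 2)) := fun x hx y hy hxy ↦
    injOn_sin ⟨by linarith [hx.1, pi_pos], hx.2.le⟩ ⟨by linarith [hy.1, pi_pos], hy.2.le⟩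
      (mul_left_cancel₀ hr.ne' hxy)
  rw [← Set.Ioo_union_Ico_eq_Ioo hr hR, lintegral_union measurableSet_Ico hdisj, htail, add_zero,
    ← image_mul_sin_Ioo hr, lintegral_image_eq_lintegral_abs_deriv_mul measurableSet_Ioo
      (fun θ _ ↦ ((hasDerivAt_sin θ).const_mul r).hasDerivWithinAt) hinj]
  refine setLIntegral_congr_fun measurableSet_Ioo fun θ hθ ↦ ?_
  have hsq : r ^ 2 - (r * sin θ) ^ 2 = (r * cos θ) ^ 2 := by rw [mul_pow, mul_pow, cos_sq']; ring
  rw [hsq, sqrt_sq (hcos hθ).le, abs_of_pos (hcos hθ), mul_left_comm,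
    ← ENNReal.ofReal_mul (hcos hθ).le, mul_inv_cancel₀ (hcos hθ).ne', ENNReal.ofReal_one, mul_one]

-- Both sides integrate `g`, as a function of two of the coordinates, over an octant of the unit
-- sphere; by Archimedes the area element is `dz dθ`, whichever axis is taken as the polar one.
lemma lintegral_octant_swap {g : ℝ → ℝ → ENNReal} (hg : Measurable (Function.uncurry g)) :
    ∫⁻ z in Set.Ioo 0 1, ∫⁻ θ in Set.Ioo 0 (π / 2), g (√(1 - z ^ 2) * sin θ) z =
      ∫⁻ y in Set.Ioo 0 1, ∫⁻ θ in Set.Ioo 0 (π / 2), g y (√(1 - y ^ 2) * sin θ) := by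
  have hdisc {z : ℝ} (hz : z ∈ Set.Ioo 0 1) (f : ℝ → ENNReal) :
      ∫⁻ θ in Set.Ioo 0 (π / 2), f (√(1 - z ^ 2) * sin θ) =
        ∫⁻ y in Set.Ioo 0 1, f y * ENNReal.ofReal (√(1 - z ^ 2 - y ^ 2))⁻¹ := by
    have hz2 : 0 < 1 - z ^ 2 := by nlinarith [hz.1, hz.2]
    rw [← lintegral_Ioo_mul_inv_sqrt_sq_sub_sq (sqrt_pos.2 hz2)
      (sqrt_le_one.2 (by linarith [sq_nonneg z])), sq_sqrt hz2.le]
  rw [setLIntegral_congr_fun measurableSet_Ioo fun z hz ↦ hdisc hz (g · z),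
    setLIntegral_congr_fun measurableSet_Ioo fun y hy ↦ hdisc hy (g y), lintegral_lintegral_swap]
  · simp only [sub_right_comm]
  · exact ((hg.comp measurable_swap).mul (by fun_prop)).aemeasurable

lemma lintegral_quarterPeriod_one_sq_mul {w : ℝ → ENNReal} (hw : Measurable w) :
    ∫⁻ z in Set.Ioo 0 1, w z * ENNReal.ofReal (quarterPeriod 1 (z ^ 2)) =
      ∫⁻ φ in Set.Ioo 0 (π / 2), ∫⁻ θ in Set.Ioo 0 (π / 2), w (cos φ * sin θ) := by
  have hg : Measurable (Function.uncurry fun y z ↦ w z * ENNReal.ofReal (√(1 - y ^ 2))⁻¹) := by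
    fun_prop
  have hleft {z : ℝ} (hz : z ∈ Set.Ioo 0 1) :
      ∫⁻ θ in Set.Ioo 0 (π / 2),
          w z * ENNReal.ofReal (√(1 - (√(1 - z ^ 2) * sin θ) ^ 2))⁻¹ =
        w z * ENNReal.ofReal (quarterPeriod 1 (z ^ 2)) := by
    rw [lintegral_const_mul _ (by fun_prop), ofReal_quarterPeriod one_pos (pow_pos hz.1 2)]
    congr! 6 with θ
    rw [mul_pow, sq_sqrt (by nlinarith [hz.1, hz.2]), cos_sq']
    ring
  rw [← setLIntegral_congr_fun measurableSet_Ioo fun z hz ↦ hleft hz, lintegral_octant_swap hg]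
  have hsubst := lintegral_Ioo_mul_inv_sqrt_sq_sub_sq one_pos le_rfl fun y ↦
    ∫⁻ θ in Set.Ioo 0 (π / 2), w (√(1 - y ^ 2) * sin θ)
  simp only [one_mul, one_pow] at hsubst
  simp only [lintegral_mul_const' _ _ ENNReal.ofReal_ne_top, hsubst, ← cos_sq']
  refine setLIntegral_congr_fun measurableSet_Ioo fun φ hφ ↦ ?_
  rw [sqrt_sq (cos_pos_of_mem_Ioo ⟨by linarith [hφ.1, pi_pos], hφ.2⟩).le]

lemma integral_inv_sqrt_mul_quarterPeriod_one_sq {u : ℝ} (hu1 : u < 1) :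
    ∫ z in 0..1, (√(1 - u + u * z ^ 2))⁻¹ * quarterPeriod 1 (z ^ 2) =
      ∫ φ in 0..π / 2, quarterPeriod (1 - u * sin φ ^ 2) (1 - u) := by
  have hm {f g : ℝ → ℝ} (hf : Measurable f) (hg : Measurable g) :
      Measurable fun x ↦ quarterPeriod (f x) (g x) :=
    measurable_uncurry_quarterPeriod.comp (hf.prodMk hg)
  have h1u := sub_pos.2 hu1
  have hmz : Measurable fun z ↦ (√(1 - u + u * z ^ 2))⁻¹ * quarterPeriod 1 (z ^ 2) :=
    .mul (by fun_prop) (hm (by fun_prop) (by fun_prop))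
  have hinner φ : ∫⁻ θ in Set.Ioo 0 (π / 2),
      ENNReal.ofReal (√(1 - u + u * (cos φ * sin θ) ^ 2))⁻¹ =
        ENNReal.ofReal (quarterPeriod (1 - u * sin φ ^ 2) (1 - u)) := by
    rw [quarterPeriod_comm, ofReal_quarterPeriod h1u (one_sub_mul_sin_sq_pos hu1 φ)]
    congr! 5 with θ
    rw [mul_pow, cos_sq' φ, cos_sq' θ]
    ring
  rw [integral_of_le zero_le_one, integral_of_le pi_div_two_pos.le, integral_Ioc_eq_integral_Ioo,
    integral_Ioc_eq_integral_Ioo,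
    integral_eq_lintegral_of_nonneg_ae
      (ae_of_all _ fun z ↦ mul_nonneg (by positivity) (quarterPeriod_nonneg _ _))
      hmz.aestronglyMeasurable,
    integral_eq_lintegral_of_nonneg_ae (ae_of_all _ fun φ ↦ quarterPeriod_nonneg _ _)
      (hm (by fun_prop) (by fun_prop)).aestronglyMeasurable]
  simp only [← hinner, ENNReal.ofReal_mul (inv_nonneg.2 (sqrt_nonneg _))]
  rw [lintegral_quarterPeriod_one_sq_mul (by fun_prop)]

lemma hasDerivAt_sqrt_one_sub_sq {z : ℝ} (hz : z ^ 2 < 1) :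
    HasDerivAt (fun x ↦ √(1 - x ^ 2)) (-(z / √(1 - z ^ 2))) z := by
  refine (((hasDerivAt_pow 2 z).const_sub 1).sqrt (sub_pos.2 hz).ne').congr_deriv ?_
  have := sqrt_pos.2 (sub_pos.2 hz)
  field_simp
  norm_num

lemma integral_mul_ellipticK_div_eq_integral {u : ℝ} (hu1 : u < 1) :
    ∫ k in 0..1, k * ellipticK k / (√(1 - k ^ 2) * √(1 - k ^ 2 * u)) =
      ∫ φ in 0..π / 2, quarterPeriod (1 - u * sin φ ^ 2) (1 - u) := by
  have hsq {z : ℝ} (hz : z ∈ Set.Ioo 0 1) : z ^ 2 < 1 := by nlinarith [hz.1, hz.2]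
  have hsubst := integral_comp_of_deriv_nonpos zero_le_one
    (f := fun k ↦ k * ellipticK k / (√(1 - k ^ 2) * √(1 - k ^ 2 * u))) (by fun_prop)
    (fun z hz ↦ hasDerivAt_sqrt_one_sub_sq (hsq hz))
    fun z hz ↦ neg_nonpos.2 (div_nonneg hz.1.le (sqrt_nonneg _))
  simp only [one_pow, sub_self, sqrt_zero, ne_eq, OfNat.ofNat_ne_zero, not_false_eq_true,
    zero_pow, sub_zero, sqrt_one] at hsubst
  rw [hsubst, ← integral_inv_sqrt_mul_quarterPeriod_one_sq hu1]
  refine integral_congr_Ioo_of_le zero_le_one fun z hz ↦ ?_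
  have hz0 := hz.1
  have hk2 := sub_pos.2 (hsq hz)
  rw [ellipticK_eq_quarterPeriod, sq_sqrt hk2.le, sub_sub_cancel, sqrt_sq hz0.le,
    show 1 - (1 - z ^ 2) * u = 1 - u + u * z ^ 2 by ring]
  field_simp

theorem stmt_12 (u : ℝ) (hu : 0 < u) (hu1 : u < 1) :
    (∫ k in (0:ℝ)..(Real.sqrt u),
        ellipticK k / (Real.sqrt (1-k^2) * Real.sqrt (u-k^2)))
      = (∫ k in (0:ℝ)..1,
          k * ellipticK k / (Real.sqrt (1-k^2) * Real.sqrt (1-k^2*u))) ∧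
    (∫ k in (0:ℝ)..1,
        k * ellipticK k / (Real.sqrt (1-k^2) * Real.sqrt (1-k^2*u)))
      = (1/(1+Real.sqrt u)) *
          (ellipticK (Real.sqrt (2*Real.sqrt u / (1+Real.sqrt u))))^2 := by
  have hfirst := integral_ellipticK_div_eq_integral hu hu1
  have hsecond := integral_mul_ellipticK_div_eq_integral hu1
  have hsqrt : √u < 1 := by rwa [sqrt_lt' one_pos, one_pow]
  have hsquare := ellipticK_sq_eq_integral (sqrt_nonneg u) hsqrt
  rw [sq_sqrt hu.le] at hsquare
  exact ⟨hfirst.trans hsecond.symm, hsecond.trans hsquare.symm⟩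
end

section
/- For every t with 0 < t < 1, [K(√t)]² = (2/π) ∫_0^1 K(√μ) K(√(1−μ)) / (1 − μ t) dμ. -/
open Real MeasureTheory intervalIntegral Filter Topology

/-!
Write `(2 / π) K(√x) = ∑ bₖ xᵏ` with `bₖ = ((1/2)ₖ / k!)²`, and let `uₙ = ∑ bₖ bₙ₋ₖ` be the
coefficients of the square. Expanding `1 / (1 - μ t)` geometrically, the theorem says that the
moments `Mₙ = ∫ μⁿ K(√μ) K(√(1 - μ)) dμ` equal `(π³ / 8) uₙ`. Integrating `K(√μ)` termwise gives
`Mₙ = π ∑ bₖ cₙ₊ₖ`, where `cₘ = 1 / ((2m + 1)² bₘ)` continues `b` to the index `-(m + 1)`, so that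
`Mₙ` is formally a multiple of `u` at the index `-(n + 1)`. A single Zeilberger certificate in a
real parameter `ν` therefore gives both sequences a three-term recurrence: `ν = n + 2` for `u` and
`ν = -(n + 1)` for `M`. The two recurrences coincide because `ν ↦ 1 - ν` only reverses the order
and the sign of the terms. The initial values agree because `∑ 1 / (2k + 1)² = π² / 8`, and because
`μ ↦ 1 - μ` gives `M₁ = M₀ / 2`.
-/

section Telescoping

theorem eq_sub_of_hasSum_of_telescoping {G : Type*} [AddCommGroup G] [TopologicalSpace G]
    [ContinuousSub G] [T2Space G] {f g : ℕ → G} {s l : G} (hf : HasSum f s)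
    (hfg : ∀ k, f k = g (k + 1) - g k) (hg : Tendsto g atTop (𝓝 l)) : s = l - g 0 := by
  refine tendsto_nhds_unique hf.tendsto_sum_nat ((hg.sub_const (g 0)).congr fun n ↦ ?_)
  simp only [hfg, Finset.sum_range_sub]

theorem hasSum_of_nonneg_of_telescoping {f g h : ℕ → ℝ} {s l : ℝ} (hf : ∀ k, 0 ≤ f k)
    (hh : HasSum h s) (hfg : ∀ k, f k = h k + (g (k + 1) - g k))
    (hg : Tendsto g atTop (𝓝 l)) : HasSum f (s + (l - g 0)) := by
  rw [hasSum_iff_tendsto_nat_of_nonneg hf]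
  refine (hh.tendsto_sum_nat.add (hg.sub_const (g 0))).congr fun n ↦ ?_
  simp only [hfg, Finset.sum_add_distrib, Finset.sum_range_sub]

end Telescoping

section Integration

theorem intervalIntegral_eq_of_hasSum_of_nonneg {ι : Type*} [Countable ι] {f : ι → ℝ → ℝ}
    {F : ℝ → ℝ} {a b s : ℝ} (hab : a ≤ b) (hf : ∀ i, IntervalIntegrable (f i) volume a b)
    (hf_nonneg : ∀ i, ∀ x ∈ Set.Ioo a b, 0 ≤ f i x)
    (hF : ∀ x ∈ Set.Ioo a b, HasSum (f · x) (F x))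
    (hs : HasSum (fun i ↦ ∫ x in a..b, f i x) s) : ∫ x in a..b, F x = s := by
  simp only [integral_of_le hab, integral_Ioc_eq_integral_Ioo] at hs ⊢
  have hnorm : ∀ i, ∫ x in Set.Ioo a b, ‖f i x‖ = ∫ x in Set.Ioo a b, f i x := fun i ↦
    setIntegral_congr_fun measurableSet_Ioo fun x hx ↦ norm_of_nonneg (hf_nonneg i x hx)
  have hsum := hasSum_integral_of_summable_integral_norm
    (fun i ↦ (intervalIntegrable_iff_integrableOn_Ioo_of_le hab).1 (hf i))
    (by simpa only [hnorm] using hs.summable)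
  rw [hs.unique hsum]
  exact setIntegral_congr_fun measurableSet_Ioo fun x hx ↦ (hF x hx).tsum_eq.symm

theorem hasSum_pow_mul_integral_pow_mul {f : ℝ → ℝ} {t : ℝ}
    (hf : IntervalIntegrable f volume 0 1) (ht : |t| < 1) :
    HasSum (fun n : ℕ ↦ t ^ n * ∫ x in (0 : ℝ)..1, x ^ n * f x)
      (∫ x in (0 : ℝ)..1, f x / (1 - x * t)) := by
  have hmem : ∀ x ∈ Set.uIoc (0 : ℝ) 1, |x| ≤ 1 := fun x hx ↦ by
    rw [Set.uIoc_of_le zero_le_one] at hx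
    exact abs_le.2 ⟨by linarith [hx.1], hx.2⟩
  simp only [← intervalIntegral.integral_const_mul]
  refine intervalIntegral.hasSum_integral_of_dominated_convergence (fun n x ↦ |t| ^ n * |f x|)
    (fun n ↦ ?_) (fun n ↦ .of_forall fun x hx ↦ ?_) (.of_forall fun x _ ↦ ?_) ?_
    (.of_forall fun x hx ↦ ?_)
  · have := hf.aestronglyMeasurable_restrict_uIoc
    fun_prop
  · rw [norm_mul, norm_mul, norm_pow, norm_pow]
    exact mul_le_mul_of_nonneg_left (mul_le_of_le_one_left (abs_nonneg _)
      (pow_le_one₀ (abs_nonneg x) (hmem x hx))) (by positivity)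
  · exact (summable_geometric_of_lt_one (abs_nonneg t) ht).mul_right _
  · simp only [tsum_mul_right]
    exact hf.abs.const_mul _
  · have hxt : |x * t| < 1 := by
      rw [abs_mul]
      exact (mul_le_of_le_one_left (abs_nonneg t) (hmem x hx)).trans_lt ht
    have h := (hasSum_geometric_of_abs_lt_one hxt).mul_left (f x)
    rw [← div_eq_mul_inv] at h
    refine h.congr_fun fun n ↦ ?_
    ring

theorem integral_id_mul_of_symm {f : ℝ → ℝ} (hf : IntervalIntegrable f volume 0 1)
    (hsymm : ∀ x, f (1 - x) = f x) :
    ∫ x in (0 : ℝ)..1, x * f x = (∫ x in (0 : ℝ)..1, f x) / 2 := by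
  have hxf : IntervalIntegrable (fun x ↦ x * f x) volume 0 1 :=
    hf.continuousOn_mul continuousOn_id
  have hrefl := integral_comp_sub_left (a := 0) (b := 1) (fun x ↦ x * f x) 1
  simp only [hsymm, sub_mul, one_mul, sub_self, sub_zero] at hrefl
  rw [intervalIntegral.integral_sub hf hxf] at hrefl
  linarith

end Integration

section Coefficients

/-- The coefficients of `(2 / π) K(√x) = ∑ bₖ xᵏ`, namely `bₖ = ((1/2)ₖ / k!)²`. -/
noncomputable def ellipticCoeff (k : ℕ) : ℝ := (k.centralBinom / 4 ^ k) ^ 2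

theorem centralBinom_div_four_pow_succ (k : ℕ) : ((k + 1).centralBinom / 4 ^ (k + 1) : ℝ) =
    (2 * k + 1) / (2 * k + 2) * (k.centralBinom / 4 ^ k) := by
  have h : ((k : ℝ) + 1) * (k + 1).centralBinom = 2 * (2 * k + 1) * k.centralBinom :=
    mod_cast k.succ_mul_centralBinom_succ
  rw [pow_succ]
  field_simp
  linear_combination 2 * h

theorem centralBinom_div_four_pow_le_one (k : ℕ) : (k.centralBinom / 4 ^ k : ℝ) ≤ 1 := by
  induction k with
  | zero => simp
  | succ k ih =>
    rw [centralBinom_div_four_pow_succ]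
    refine mul_le_one₀ ?_ (by positivity) ih
    rw [div_le_one (by positivity)]
    linarith

theorem ellipticCoeff_zero : ellipticCoeff 0 = 1 := by simp [ellipticCoeff]

theorem ellipticCoeff_succ (k : ℕ) :
    ellipticCoeff (k + 1) = ((2 * k + 1) / (2 * k + 2)) ^ 2 * ellipticCoeff k := by
  rw [ellipticCoeff, centralBinom_div_four_pow_succ, mul_pow, ellipticCoeff]

theorem ellipticCoeff_pos (k : ℕ) : 0 < ellipticCoeff k := by
  have := k.centralBinom_pos
  unfold ellipticCoeff
  positivity

theorem ellipticCoeff_mul_wallis (k : ℕ) : (2 * k + 1) * ellipticCoeff k * Wallis.W k = 1 := by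
  induction k with
  | zero => simp [ellipticCoeff_zero, Wallis.W]
  | succ k ih =>
    refine Eq.trans ?_ ih
    rw [ellipticCoeff_succ, Wallis.W_succ]
    push_cast
    field_simp
    ring

theorem tendsto_mul_ellipticCoeff :
    Tendsto (fun k : ℕ ↦ (k : ℝ) * ellipticCoeff k) atTop (𝓝 (1 / π)) := by
  have h := ((tendsto_natCast_div_add_atTop (1 / 2 : ℝ)).const_mul (1 / 2)).mul
    (Wallis.tendsto_W_nhds_pi_div_two.inv₀ (by positivity))
  rw [show 1 / 2 * 1 * (π / 2)⁻¹ = 1 / π by field_simp] at h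
  refine h.congr fun k ↦ ?_
  have hW := Wallis.W_pos k
  have hb : ellipticCoeff k = 1 / ((2 * k + 1) * Wallis.W k) := by
    rw [eq_div_iff (by positivity)]
    linear_combination ellipticCoeff_mul_wallis k
  rw [hb]
  field_simp

/-- The continuation of `ellipticCoeff` to the index `-(n + 1)`, up to normalisation: the
recurrence `(2k + 2)² bₖ₊₁ = (2k + 1)² bₖ` becomes `(2n + 3)² cₙ₊₁ = (2n + 2)² cₙ` under
`k = -(n + 2)`. -/
noncomputable def dualEllipticCoeff (n : ℕ) : ℝ := 1 / ((2 * n + 1) ^ 2 * ellipticCoeff n)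

theorem dualEllipticCoeff_pos (n : ℕ) : 0 < dualEllipticCoeff n := by
  have := ellipticCoeff_pos n
  unfold dualEllipticCoeff
  positivity

theorem dualEllipticCoeff_succ (n : ℕ) :
    dualEllipticCoeff (n + 1) = ((2 * n + 2) / (2 * n + 3)) ^ 2 * dualEllipticCoeff n := by
  have := ellipticCoeff_pos n
  rw [dualEllipticCoeff, dualEllipticCoeff, ellipticCoeff_succ]
  push_cast
  field_simp
  ring

theorem antitone_dualEllipticCoeff : Antitone dualEllipticCoeff := by
  refine antitone_nat_of_succ_le fun n ↦ ?_
  rw [dualEllipticCoeff_succ]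
  refine mul_le_of_le_one_left (dualEllipticCoeff_pos n).le (pow_le_one₀ (by positivity) ?_)
  rw [div_le_one (by positivity)]
  linarith

theorem ellipticCoeff_mul_dualEllipticCoeff (k : ℕ) :
    ellipticCoeff k * dualEllipticCoeff k = 1 / (2 * k + 1) ^ 2 := by
  have := ellipticCoeff_pos k
  unfold dualEllipticCoeff
  field_simp

theorem ellipticCoeff_mul_dualEllipticCoeff_add_le (n k : ℕ) :
    ellipticCoeff k * dualEllipticCoeff (n + k) ≤ 1 / (2 * k + 1) ^ 2 := by
  rw [← ellipticCoeff_mul_dualEllipticCoeff]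
  exact mul_le_mul_of_nonneg_left (antitone_dualEllipticCoeff (Nat.le_add_left k n))
    (ellipticCoeff_pos k).le

end Coefficients

section Recurrence

theorem tendsto_quadratic_div_sq (a b c : ℝ) :
    Tendsto (fun k : ℕ ↦ k * (a + b * k) / (2 * (c - k) - 1) ^ 2) atTop (𝓝 (b / 4)) := by
  have hinv : Tendsto (fun k : ℕ ↦ (k : ℝ)⁻¹) atTop (𝓝 0) := tendsto_inv_atTop_nhds_zero_nat
  have h := ((hinv.const_mul a).add_const b).div
    (((hinv.const_mul (2 * c - 1)).sub_const 2).pow 2) (by norm_num)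
  rw [show (a * 0 + b) / ((2 * c - 1) * 0 - 2) ^ 2 = b / 4 by norm_num] at h
  refine h.congr' ?_
  filter_upwards [eventually_ne_atTop 0] with k hk
  have hk : (k : ℝ) ≠ 0 := mod_cast hk
  have hnum : k * (a + b * k) = (k : ℝ) ^ 2 * (a * (k : ℝ)⁻¹ + b) := by field_simp
  have hden : 2 * (c - k) - 1 = k * ((2 * c - 1) * (k : ℝ)⁻¹ - 2) := by
    field_simp
    ring
  rw [hnum, hden, mul_pow, mul_div_mul_left _ _ (pow_ne_zero 2 hk), Pi.div_apply]

/-- The antidifference that Zeilberger's algorithm finds for the recurrence of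
`∑ₖ bₖ wₖ`, where `wₖ` is a continuation of `b` to the index `ν - k`. -/
noncomputable def zeilbergerCertificate (ν : ℝ) (w : ℕ → ℝ) (k : ℕ) : ℝ :=
  k * (ν * (4 * ν - 3) + (2 - 4 * ν) * k) / (2 * (ν - k) - 1) ^ 2 * (k * (ellipticCoeff k * w k))

variable {ν : ℝ} {w : ℕ → ℝ}

theorem zeilbergerCertificate_succ_sub (hν : ∀ k : ℕ, 2 * (ν - k) - 1 ≠ 0)
    (hw : ∀ k, w (k + 1) = (2 * (ν - k) / (2 * (ν - k) - 1)) ^ 2 * w k) (k : ℕ) :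
    ν ^ 3 * (ellipticCoeff k * w k)
        - (2 * ν - 1) * (ν ^ 2 - ν + 1 / 2) * (ellipticCoeff k * w (k + 1))
        + (ν - 1) ^ 3 * (ellipticCoeff k * w (k + 2))
      = zeilbergerCertificate ν w (k + 1) - zeilbergerCertificate ν w k := by
  have hj := hν k
  have hj' := hν (k + 1)
  rw [zeilbergerCertificate, zeilbergerCertificate, hw (k + 1), hw k, ellipticCoeff_succ]
  push_cast at hj' ⊢
  field_simp
  ring

theorem recurrence_of_hasSum_ellipticCoeff_mul {s₀ s₁ s₂ : ℝ}
    (hν : ∀ k : ℕ, 2 * (ν - k) - 1 ≠ 0)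
    (hw : ∀ k, w (k + 1) = (2 * (ν - k) / (2 * (ν - k) - 1)) ^ 2 * w k)
    (hlim : Tendsto (fun k : ℕ ↦ k * (ellipticCoeff k * w k)) atTop (𝓝 0))
    (h₀ : HasSum (fun k ↦ ellipticCoeff k * w k) s₀)
    (h₁ : HasSum (fun k ↦ ellipticCoeff k * w (k + 1)) s₁)
    (h₂ : HasSum (fun k ↦ ellipticCoeff k * w (k + 2)) s₂) :
    ν ^ 3 * s₀ - (2 * ν - 1) * (ν ^ 2 - ν + 1 / 2) * s₁ + (ν - 1) ^ 3 * s₂ = 0 := by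
  have hcert : Tendsto (zeilbergerCertificate ν w) atTop (𝓝 0) := by
    simpa only [mul_zero, zeilbergerCertificate] using! (tendsto_quadratic_div_sq _ _ ν).mul hlim
  have h := eq_sub_of_hasSum_of_telescoping (((h₀.mul_left (ν ^ 3)).sub (h₁.mul_left
    ((2 * ν - 1) * (ν ^ 2 - ν + 1 / 2)))).add (h₂.mul_left ((ν - 1) ^ 3)))
    (zeilbergerCertificate_succ_sub hν hw) hcert
  simpa [zeilbergerCertificate] using h

end Recurrence

section SquareCoefficients

/-- The coefficients of `((2 / π) K(√x))²`. -/
noncomputable def ellipticSqCoeff (n : ℕ) : ℝ :=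
  ∑ p ∈ Finset.HasAntidiagonal.antidiagonal n, ellipticCoeff p.1 * ellipticCoeff p.2

theorem ellipticSqCoeff_zero : ellipticSqCoeff 0 = 1 := by
  simp [ellipticSqCoeff, ellipticCoeff_zero]

theorem ellipticSqCoeff_one : ellipticSqCoeff 1 = 1 / 2 := by
  norm_num [ellipticSqCoeff, Finset.Nat.antidiagonal_succ, ellipticCoeff_succ, ellipticCoeff_zero]

/-- The reversed sequence `k ↦ b (n - k)`, extended by zero to `k > n`. -/
noncomputable def reversedEllipticCoeff (n k : ℕ) : ℝ := if k ≤ n then ellipticCoeff (n - k) else 0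

theorem reversedEllipticCoeff_succ_succ (n k : ℕ) :
    reversedEllipticCoeff (n + 1) (k + 1) = reversedEllipticCoeff n k := by
  simp only [reversedEllipticCoeff, Nat.add_le_add_iff_right, Nat.add_sub_add_right]

theorem reversedEllipticCoeff_of_lt {n k : ℕ} (h : n < k) : reversedEllipticCoeff n k = 0 :=
  if_neg h.not_ge

theorem two_mul_natCast_sub_natCast_sub_one_ne_zero (n k : ℕ) : 2 * ((n : ℝ) - k) - 1 ≠ 0 := by
  have h : (2 * ((n : ℤ) - k) - 1 : ℤ) ≠ 0 := by omega
  exact mod_cast h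

theorem reversedEllipticCoeff_succ_right (n k : ℕ) : reversedEllipticCoeff n (k + 1) =
    (2 * ((n : ℝ) - k) / (2 * ((n : ℝ) - k) - 1)) ^ 2 * reversedEllipticCoeff n k := by
  rcases lt_trichotomy n k with h | rfl | h
  · simp [reversedEllipticCoeff_of_lt h, reversedEllipticCoeff_of_lt (h.trans k.lt_succ_self)]
  · simp [reversedEllipticCoeff_of_lt]
  · obtain ⟨j, rfl⟩ := Nat.exists_eq_add_of_lt h
    have hj := two_mul_natCast_sub_natCast_sub_one_ne_zero (k + j + 1) k
    rw [reversedEllipticCoeff, reversedEllipticCoeff, if_pos (by omega), if_pos (by omega),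
      show k + j + 1 - (k + 1) = j by omega, show k + j + 1 - k = j + 1 by omega,
      ellipticCoeff_succ]
    push_cast at hj ⊢
    rw [show 2 * ((k : ℝ) + j + 1 - k) - 1 = 2 * j + 1 by ring]
    field_simp
    ring

theorem hasSum_ellipticSqCoeff (n : ℕ) :
    HasSum (fun k ↦ ellipticCoeff k * reversedEllipticCoeff n k) (ellipticSqCoeff n) := by
  have hrange : ellipticSqCoeff n =
      ∑ k ∈ Finset.range n.succ, ellipticCoeff k * reversedEllipticCoeff n k := by
    rw [ellipticSqCoeff, Finset.Nat.sum_antidiagonal_eq_sum_range_succ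
      fun i j ↦ ellipticCoeff i * ellipticCoeff j]
    refine Finset.sum_congr rfl fun k hk ↦ ?_
    rw [reversedEllipticCoeff, if_pos (Finset.mem_range_succ_iff.1 hk)]
  rw [hrange]
  refine hasSum_sum_of_ne_finset_zero fun k hk ↦ ?_
  rw [Finset.mem_range_succ_iff, not_le] at hk
  rw [reversedEllipticCoeff_of_lt hk, mul_zero]

theorem ellipticSqCoeff_recurrence (n : ℕ) :
    ((n : ℝ) + 2) ^ 3 * ellipticSqCoeff (n + 2)
      = (2 * n + 3) * ((n + 1) ^ 2 + (n + 1) + 1 / 2) * ellipticSqCoeff (n + 1)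
        - (n + 1) ^ 3 * ellipticSqCoeff n := by
  have hlim : Tendsto (fun k : ℕ ↦ k * (ellipticCoeff k * reversedEllipticCoeff (n + 2) k))
      atTop (𝓝 0) := by
    refine tendsto_const_nhds.congr' ?_
    filter_upwards [eventually_gt_atTop (n + 2)] with k hk
    rw [reversedEllipticCoeff_of_lt hk, mul_zero, mul_zero]
  have h := recurrence_of_hasSum_ellipticCoeff_mul (ν := (n + 2 : ℕ))
    (two_mul_natCast_sub_natCast_sub_one_ne_zero (n + 2)) (reversedEllipticCoeff_succ_right (n + 2))
    hlim (hasSum_ellipticSqCoeff (n + 2))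
    (by simpa only [reversedEllipticCoeff_succ_succ] using hasSum_ellipticSqCoeff (n + 1))
    (by simpa only [reversedEllipticCoeff_succ_succ] using hasSum_ellipticSqCoeff n)
  push_cast at h
  linear_combination h

end SquareCoefficients

section PowerSeries

theorem ringChoose_half_add_sub_one (k : ℕ) :
    Ring.choose ((1 : ℝ) / 2 + k - 1) k = k.centralBinom / 4 ^ k := by
  have hpoch : (ascPochhammer ℝ k).eval (1 / 2) = k.factorial * (k.centralBinom / 4 ^ k) := by
    induction k with
    | zero => simp
    | succ k ih =>
      rw [ascPochhammer_succ_eval, ih, centralBinom_div_four_pow_succ, Nat.factorial_succ]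
      push_cast
      field_simp
      ring
  rw [← Polynomial.ascPochhammer_smeval_eq_eval,
    ← Ring.factorial_nsmul_multichoose_eq_ascPochhammer, nsmul_eq_mul] at hpoch
  rw [Ring.choose, ← mul_left_cancel₀ (by positivity) hpoch]
  congr 1
  ring

theorem hasSum_one_div_sqrt_one_sub {y : ℝ} (hy : |y| < 1) :
    HasSum (fun k : ℕ ↦ k.centralBinom / 4 ^ k * y ^ k) (1 / √(1 - y)) := by
  have h := (one_div_one_sub_rpow_hasFPowerSeriesOnBall_zero (1 / 2)).hasSum (y := y)
    (by simpa [enorm_eq_nnnorm, ← NNReal.coe_lt_one] using hy)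
  simpa only [zero_add, ← sqrt_eq_rpow, FormalMultilinearSeries.ofScalars_apply_eq,
    ringChoose_half_add_sub_one, smul_eq_mul] using h

theorem integral_sin_pow_even_zero_pi_div_two (k : ℕ) :
    ∫ θ in (0 : ℝ)..(π / 2), sin θ ^ (2 * k) = π / 2 * (k.centralBinom / 4 ^ k) := by
  induction k with
  | zero => simp
  | succ k ih =>
    rw [mul_add, mul_one, integral_sin_pow, ih, centralBinom_div_four_pow_succ]
    simp only [sin_zero, cos_pi_div_two, zero_pow (Nat.succ_ne_zero _), zero_mul, mul_zero,
      sub_self, zero_div, zero_add]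
    push_cast
    ring

theorem hasSum_ellipticK {x : ℝ} (hx₀ : 0 ≤ x) (hx₁ : x < 1) :
    HasSum (fun k ↦ π / 2 * (ellipticCoeff k * x ^ k)) (ellipticK √x) := by
  have hsin : ∀ θ : ℝ, |x * sin θ ^ 2| ≤ x := fun θ ↦ by
    rw [abs_of_nonneg (by positivity)]
    exact mul_le_of_le_one_right hx₀ (sin_sq_le_one θ)
  have hterm : ∀ k : ℕ, π / 2 * (ellipticCoeff k * x ^ k) =
      ∫ θ in (0 : ℝ)..(π / 2), k.centralBinom / 4 ^ k * (x * sin θ ^ 2) ^ k := fun k ↦ by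
    simp only [mul_pow, ← pow_mul, intervalIntegral.integral_const_mul,
      integral_sin_pow_even_zero_pi_div_two, ellipticCoeff]
    ring
  simp only [hterm, ellipticK, sq_sqrt hx₀]
  refine intervalIntegral.hasSum_integral_of_dominated_convergence (fun k _ ↦ x ^ k)
    (fun k ↦ Continuous.aestronglyMeasurable (by fun_prop)) (fun k ↦ .of_forall fun θ _ ↦ ?_)
    (.of_forall fun θ _ ↦ summable_geometric_of_lt_one hx₀ hx₁) intervalIntegrable_const
    (.of_forall fun θ _ ↦ hasSum_one_div_sqrt_one_sub ((hsin θ).trans_lt hx₁))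
  rw [norm_mul, norm_pow, norm_eq_abs, norm_eq_abs, abs_of_nonneg (by positivity)]
  exact (mul_le_of_le_one_left (by positivity) (centralBinom_div_four_pow_le_one k)).trans
    (pow_le_pow_left₀ (abs_nonneg _) (hsin θ) k)

theorem hasSum_ellipticK_sq {x : ℝ} (hx₀ : 0 ≤ x) (hx₁ : x < 1) :
    HasSum (fun n ↦ (π / 2) ^ 2 * (ellipticSqCoeff n * x ^ n)) (ellipticK √x ^ 2) := by
  have hK := hasSum_ellipticK hx₀ hx₁
  have h := (summable_norm_sum_mul_antidiagonal_of_summable_norm hK.summable.norm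
    hK.summable.norm).of_norm.hasSum
  rw [← tsum_mul_tsum_eq_tsum_sum_antidiagonal_of_summable_norm hK.summable.norm hK.summable.norm,
    hK.tsum_eq, ← sq] at h
  refine h.congr_fun fun n ↦ ?_
  rw [ellipticSqCoeff, Finset.sum_mul, Finset.mul_sum]
  refine Finset.sum_congr rfl fun p hp ↦ ?_
  rw [← Finset.HasAntidiagonal.mem_antidiagonal.1 hp, pow_add]
  ring

theorem ellipticK_nonneg (k : ℝ) : 0 ≤ ellipticK k :=
  integral_nonneg (by positivity) fun θ _ ↦ by positivity

end PowerSeries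

section ComplementaryMoments

/-- The value `B(k + 1, j + 1)` of Euler's beta function. -/
noncomputable def betaNat (k j : ℕ) : ℝ := k.factorial * j.factorial / (k + j + 1).factorial

theorem betaNat_nonneg (k j : ℕ) : 0 ≤ betaNat k j := by
  unfold betaNat
  positivity

theorem betaNat_zero_right (k : ℕ) : betaNat k 0 = 1 / (k + 1) := by
  rw [betaNat, add_zero, Nat.factorial_succ]
  push_cast
  field_simp
  simp

theorem betaNat_succ_right (k j : ℕ) :
    betaNat k (j + 1) = (j + 1) / (k + j + 2) * betaNat k j := by
  rw [betaNat, betaNat, ← add_assoc, Nat.factorial_succ (k + j + 1), Nat.factorial_succ j]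
  push_cast
  field_simp
  ring

theorem betaNat_succ_left (k j : ℕ) :
    betaNat (k + 1) j = (k + 1) / (k + j + 2) * betaNat k j := by
  rw [betaNat, betaNat, add_right_comm k 1 j, Nat.factorial_succ (k + j + 1),
    Nat.factorial_succ k]
  push_cast
  field_simp
  ring

theorem integral_pow_mul_one_sub_pow (k j : ℕ) :
    ∫ x in (0 : ℝ)..1, x ^ j * (1 - x) ^ k = betaNat k j := by
  induction j generalizing k with
  | zero =>
    simp only [pow_zero, one_mul, betaNat_zero_right,
      integral_comp_sub_left (fun x : ℝ ↦ x ^ k) 1]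
    simp
  | succ j ih =>
    have hsplit : ∀ x : ℝ, x ^ (j + 1) * (1 - x) ^ k =
        x ^ j * (1 - x) ^ k - x ^ j * (1 - x) ^ (k + 1) := fun x ↦ by ring
    simp only [hsplit]
    rw [intervalIntegral.integral_sub (Continuous.intervalIntegrable (by fun_prop) _ _)
      (Continuous.intervalIntegrable (by fun_prop) _ _), ih, ih, betaNat_succ_left,
      betaNat_succ_right]
    field_simp
    ring

theorem betaNat_le (k j : ℕ) : betaNat k j ≤ 1 / (k + 1) := by
  induction j with
  | zero => exact (betaNat_zero_right k).le
  | succ j ih =>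
    refine le_trans ?_ ih
    rw [betaNat_succ_right]
    refine mul_le_of_le_one_left (betaNat_nonneg k j) ?_
    rw [div_le_one (by positivity)]
    linarith [(k.cast_nonneg : (0 : ℝ) ≤ k)]

theorem tendsto_betaNat_left (j : ℕ) : Tendsto (fun k ↦ betaNat k j) atTop (𝓝 0) :=
  squeeze_zero (betaNat_nonneg · j) (betaNat_le · j) tendsto_one_div_add_atTop_nhds_zero_nat

theorem hasSum_ellipticCoeff_mul_betaNat (j : ℕ) :
    HasSum (fun k ↦ ellipticCoeff k * betaNat k j) (4 / π * dualEllipticCoeff j) := by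
  have hnonneg : ∀ j k, 0 ≤ ellipticCoeff k * betaNat k j := fun j k ↦
    mul_nonneg (ellipticCoeff_pos k).le (betaNat_nonneg k j)
  induction j with
  | zero =>
    convert hasSum_of_nonneg_of_telescoping (g := fun k ↦ 4 * (k * ellipticCoeff k)) (hnonneg 0)
      hasSum_zero (fun k ↦ ?_) (tendsto_mul_ellipticCoeff.const_mul 4) using 1
    · rw [dualEllipticCoeff, ellipticCoeff_zero, Nat.cast_zero]
      ring
    · rw [betaNat_zero_right, ellipticCoeff_succ]
      push_cast
      field_simp
      ring
  | succ j ih =>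
    have hlim := (tendsto_mul_ellipticCoeff.mul (tendsto_betaNat_left j)).const_mul
      (4 * (j + 1) / (2 * j + 3) ^ 2 : ℝ)
    convert hasSum_of_nonneg_of_telescoping (hnonneg (j + 1))
      (ih.mul_left (((2 * j + 2) / (2 * j + 3) : ℝ) ^ 2)) (fun k ↦ ?_) hlim using 1
    · rw [dualEllipticCoeff_succ]
      push_cast
      ring
    · rw [betaNat_succ_left, betaNat_succ_right, ellipticCoeff_succ]
      push_cast
      field_simp
      ring

theorem integral_pow_mul_ellipticK_complementary (j : ℕ) :
    ∫ x in (0 : ℝ)..1, x ^ j * ellipticK √(1 - x) = 2 * dualEllipticCoeff j := by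
  refine intervalIntegral_eq_of_hasSum_of_nonneg zero_le_one
    (f := fun k x ↦ π / 2 * ellipticCoeff k * (x ^ j * (1 - x) ^ k))
    (fun k ↦ Continuous.intervalIntegrable (by fun_prop) _ _) (fun k x hx ↦ ?_)
    (fun x hx ↦ ?_) ?_
  · have := ellipticCoeff_pos k
    have := hx.1
    have := sub_pos.2 hx.2
    positivity
  · refine ((hasSum_ellipticK (sub_nonneg.2 hx.2.le) (sub_lt_self 1 hx.1)).mul_left
      (x ^ j)).congr_fun fun k ↦ ?_
    ring
  · simp only [intervalIntegral.integral_const_mul, integral_pow_mul_one_sub_pow, mul_assoc]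
    rw [show 2 * dualEllipticCoeff j = π / 2 * (4 / π * dualEllipticCoeff j) by field_simp; ring]
    exact (hasSum_ellipticCoeff_mul_betaNat j).mul_left (π / 2)

-- The Bochner integral of a non-integrable function is `0`, so a nonzero value gives integrability.
theorem intervalIntegrable_pow_mul_ellipticK_complementary (j : ℕ) :
    IntervalIntegrable (fun x ↦ x ^ j * ellipticK √(1 - x)) volume 0 1 := by
  refine intervalIntegrable_of_integral_ne_zero ?_
  rw [integral_pow_mul_ellipticK_complementary]
  exact (mul_pos two_pos (dualEllipticCoeff_pos j)).ne'

end ComplementaryMoments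

section Moments

/-- The moments of `K(√x) K(√(1 - x))` on `(0, 1)`. -/
noncomputable def ellipticMoment (n : ℕ) : ℝ :=
  ∫ x in (0 : ℝ)..1, x ^ n * (ellipticK √x * ellipticK √(1 - x))

theorem hasSum_one_div_odd_sq : HasSum (fun k : ℕ ↦ 1 / (2 * k + 1 : ℝ) ^ 2) (π ^ 2 / 8) := by
  have heven : HasSum (fun k : ℕ ↦ 1 / ((2 * k : ℕ) : ℝ) ^ 2) (1 / 4 * (π ^ 2 / 6)) := by
    refine (hasSum_zeta_two.mul_left (1 / 4)).congr_fun fun k ↦ ?_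
    push_cast
    rw [mul_pow, one_div_mul_one_div]
    norm_num
  have hodd : Summable fun k : ℕ ↦ 1 / ((2 * k + 1 : ℕ) : ℝ) ^ 2 :=
    hasSum_zeta_two.summable.comp_injective (i := fun k : ℕ ↦ 2 * k + 1) fun a b h ↦ by
      simpa only [Nat.add_right_cancel_iff, Nat.mul_right_inj two_ne_zero] using h
  have htotal := (heven.even_add_odd (f := fun k : ℕ ↦ 1 / (k : ℝ) ^ 2)
    hodd.hasSum).unique hasSum_zeta_two
  have hvalue : ∑' k : ℕ, 1 / ((2 * k + 1 : ℕ) : ℝ) ^ 2 = π ^ 2 / 8 := by linarith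
  rw [← hvalue]
  simpa only [Nat.cast_add, Nat.cast_mul, Nat.cast_ofNat, Nat.cast_one] using hodd.hasSum

theorem summable_ellipticCoeff_mul_dualEllipticCoeff (n : ℕ) :
    Summable fun k ↦ ellipticCoeff k * dualEllipticCoeff (n + k) :=
  .of_nonneg_of_le (fun k ↦ (mul_pos (ellipticCoeff_pos k) (dualEllipticCoeff_pos _)).le)
    (ellipticCoeff_mul_dualEllipticCoeff_add_le n) hasSum_one_div_odd_sq.summable

theorem hasSum_ellipticMoment_div_pi (n : ℕ) :
    HasSum (fun k ↦ ellipticCoeff k * dualEllipticCoeff (n + k)) (ellipticMoment n / π) := by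
  have hsum := (summable_ellipticCoeff_mul_dualEllipticCoeff n).hasSum
  suffices ellipticMoment n = π * ∑' k, ellipticCoeff k * dualEllipticCoeff (n + k) by
    rwa [this, mul_div_cancel_left₀ _ pi_ne_zero]
  refine intervalIntegral_eq_of_hasSum_of_nonneg zero_le_one
    (f := fun k x ↦ π / 2 * ellipticCoeff k * (x ^ (n + k) * ellipticK √(1 - x)))
    (fun k ↦ (intervalIntegrable_pow_mul_ellipticK_complementary (n + k)).const_mul _)
    (fun k x hx ↦ ?_) (fun x hx ↦ ?_) ?_
  · have := ellipticCoeff_pos k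
    have := hx.1
    have := ellipticK_nonneg √(1 - x)
    positivity
  · rw [mul_left_comm]
    refine ((hasSum_ellipticK hx.1.le hx.2).mul_right (x ^ n * ellipticK √(1 - x))).congr_fun
      fun k ↦ ?_
    ring
  · simp only [intervalIntegral.integral_const_mul, integral_pow_mul_ellipticK_complementary]
    refine (hsum.mul_left π).congr_fun fun k ↦ ?_
    ring

theorem ellipticMoment_zero : ellipticMoment 0 = π ^ 3 / 8 := by
  have h := hasSum_ellipticMoment_div_pi 0
  simp only [zero_add, ellipticCoeff_mul_dualEllipticCoeff] at h
  rw [(div_eq_iff pi_ne_zero).1 (h.unique hasSum_one_div_odd_sq)]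
  ring

theorem intervalIntegrable_ellipticK_mul_ellipticK :
    IntervalIntegrable (fun x ↦ ellipticK √x * ellipticK √(1 - x)) volume 0 1 := by
  refine intervalIntegrable_of_integral_ne_zero ?_
  have h := ellipticMoment_zero
  simp only [ellipticMoment, pow_zero, one_mul] at h
  rw [h]
  positivity

theorem ellipticMoment_one : ellipticMoment 1 = ellipticMoment 0 / 2 := by
  have h := integral_id_mul_of_symm intervalIntegrable_ellipticK_mul_ellipticK fun x ↦ by
    rw [sub_sub_cancel, mul_comm]
  simpa only [ellipticMoment, pow_one, pow_zero, one_mul] using h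

theorem tendsto_mul_ellipticCoeff_mul_dualEllipticCoeff (n : ℕ) :
    Tendsto (fun k : ℕ ↦ k * (ellipticCoeff k * dualEllipticCoeff (n + k))) atTop (𝓝 0) := by
  refine squeeze_zero (fun k ↦ ?_) (fun k ↦ ?_) tendsto_one_div_add_atTop_nhds_zero_nat
  · have := ellipticCoeff_pos k
    have := dualEllipticCoeff_pos (n + k)
    positivity
  · calc (k : ℝ) * (ellipticCoeff k * dualEllipticCoeff (n + k))
        ≤ k * (1 / (2 * k + 1) ^ 2) := by
          gcongr
          exact ellipticCoeff_mul_dualEllipticCoeff_add_le n k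
      _ ≤ 1 / (k + 1) := by
          rw [mul_one_div, div_le_div_iff₀ (by positivity) (by positivity)]
          nlinarith [(k.cast_nonneg : (0 : ℝ) ≤ k)]

theorem ellipticMoment_recurrence (n : ℕ) :
    ((n : ℝ) + 2) ^ 3 * ellipticMoment (n + 2)
      = (2 * n + 3) * ((n + 1) ^ 2 + (n + 1) + 1 / 2) * ellipticMoment (n + 1)
        - (n + 1) ^ 3 * ellipticMoment n := by
  have hν : ∀ k : ℕ, 2 * (-((n : ℝ) + 1) - k) - 1 ≠ 0 := fun k ↦ by
    have : 0 < 2 * ((n : ℝ) + 1 + k) + 1 := by positivity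
    linarith
  have hw : ∀ k : ℕ, dualEllipticCoeff (n + (k + 1)) =
      (2 * (-((n : ℝ) + 1) - k) / (2 * (-((n : ℝ) + 1) - k) - 1)) ^ 2
        * dualEllipticCoeff (n + k) := fun k ↦ by
    rw [← add_assoc, dualEllipticCoeff_succ, ← neg_div_neg_eq (2 * _)]
    push_cast
    congr 3 <;> ring
  have h := recurrence_of_hasSum_ellipticCoeff_mul hν hw
    (tendsto_mul_ellipticCoeff_mul_dualEllipticCoeff n) (hasSum_ellipticMoment_div_pi n)
    (by simpa only [add_assoc, add_comm 1] using hasSum_ellipticMoment_div_pi (n + 1))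
    (by simpa only [add_assoc, add_comm 2] using hasSum_ellipticMoment_div_pi (n + 2))
  field_simp at h
  linear_combination -h / 2

theorem ellipticMoment_eq (n : ℕ) : ellipticMoment n = π ^ 3 / 8 * ellipticSqCoeff n := by
  induction n using Nat.twoStepInduction with
  | zero => rw [ellipticMoment_zero, ellipticSqCoeff_zero, mul_one]
  | one =>
    rw [ellipticMoment_one, ellipticMoment_zero, ellipticSqCoeff_one]
    ring
  | more n ih₀ ih₁ =>
    have hn : ((n : ℝ) + 2) ^ 3 ≠ 0 := by positivity
    refine mul_left_cancel₀ hn ?_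
    rw [ellipticMoment_recurrence, ih₀, ih₁]
    linear_combination -(π ^ 3 / 8) * ellipticSqCoeff_recurrence n

end Moments

theorem stmt_13 (t : ℝ) (ht : 0 < t) (ht1 : t < 1) :
    (ellipticK (Real.sqrt t))^2
      = (2/π) * ∫ μ in (0:ℝ)..1,
          ellipticK (Real.sqrt μ) * ellipticK (Real.sqrt (1-μ)) / (1 - μ*t) := by
  have hsq := (hasSum_ellipticK_sq ht.le ht1).mul_left (π / 2)
  have hmoments := hasSum_pow_mul_integral_pow_mul intervalIntegrable_ellipticK_mul_ellipticK
    (abs_lt.2 ⟨by linarith, ht1⟩)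
  have hcoeff : ∀ n, π / 2 * ((π / 2) ^ 2 * (ellipticSqCoeff n * t ^ n)) =
      t ^ n * ellipticMoment n := fun n ↦ by
    rw [ellipticMoment_eq]
    ring
  simp only [hcoeff] at hsq
  rw [← hsq.unique hmoments]
  field_simp
end

section
/- For every x with −1 < x < 1, the Cauchy principal value P∫_{−1}^1 K(√((1+ξ)/2)) K(√((1−ξ)/2)) · 2/(π (x−ξ)) dξ equals [K(√((1+x)/2))]² − [K(√((1−x)/2))]². -/
open Real MeasureTheory intervalIntegral Filter Topology

/-!
Let `w` be the arcsine density `1 / √(1 - x²)` on `(-1, 1)`. Up to the factor `√2`, the two values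
of `K` are the Abel transforms `L x = ∫_{s < x} w s / √(x - s) ds` and
`R x = ∫_{t > x} w t / √(t - x) dt`. Exchanging integrals in the Cauchy transform of `L * R` leaves
`∫_s^t dξ / ((z - ξ) √((ξ - s) (t - ξ))) = π / (√(z - s) √(z - t))` as the inner integral over
`s < t`, and the symmetry in `s` and `t` turns the double integral into
`(π / 2) (∫ w s / √(z - s) ds)²`. As `z` tends to `x` from the upper half-plane, the last integral
tends to `L x - i R x`. The real part of the limit of the Cauchy transform is the principal value,
which is therefore `(π / 2) (L² - R²)`.
-/

section ArcsineWeight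

/-- The density `1 / √((b - x) (x - a))` on `(a, b)` with respect to which arcsine laws are
defined, normalised to total mass `π`. The conventions `√x = 0` for `x ≤ 0` and `0⁻¹ = 0` make it
vanish off `(a, b)`. -/
noncomputable def arcsineWeight (a b x : ℝ) : ℝ := (√(b - x))⁻¹ * (√(x - a))⁻¹

lemma arcsineWeight_nonneg (a b x : ℝ) : 0 ≤ arcsineWeight a b x := by
  unfold arcsineWeight
  positivity

lemma arcsineWeight_of_le_left {a b x : ℝ} (hx : x ≤ a) : arcsineWeight a b x = 0 := by
  simp [arcsineWeight, Real.sqrt_eq_zero_of_nonpos (sub_nonpos.2 hx)]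

lemma arcsineWeight_of_right_le {a b x : ℝ} (hx : b ≤ x) : arcsineWeight a b x = 0 := by
  simp [arcsineWeight, Real.sqrt_eq_zero_of_nonpos (sub_nonpos.2 hx)]

lemma arcsineWeight_of_endpoints_le {a b : ℝ} (hba : b ≤ a) (x : ℝ) : arcsineWeight a b x = 0 :=
  (le_total x a).elim arcsineWeight_of_le_left fun h ↦ arcsineWeight_of_right_le (hba.trans h)

lemma arcsineWeight_neg (a b x : ℝ) : arcsineWeight a b (-x) = arcsineWeight (-b) (-a) x := by
  unfold arcsineWeight
  rw [show b - -x = x - -b by ring, show -x - a = -a - x by ring, mul_comm]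

lemma measurable_arcsineWeight : Measurable fun p : ℝ × ℝ × ℝ ↦ arcsineWeight p.2.1 p.2.2 p.1 := by
  unfold arcsineWeight
  fun_prop

variable {E : Type*} [NormedAddCommGroup E] [NormedSpace ℝ E] {a b : ℝ}

lemma support_arcsineWeight_smul_subset (f : ℝ → E) :
    (Function.support fun x ↦ arcsineWeight a b x • f x) ⊆ Set.Ioc a b := by
  refine fun x hx ↦ ⟨?_, ?_⟩
  · by_contra! h
    exact hx (by simp [arcsineWeight_of_le_left h])
  · by_contra! h
    exact hx (by simp [arcsineWeight_of_right_le h.le])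

lemma hasDerivAt_mul_cos_sq_add_mul_sin_sq (a b θ : ℝ) :
    HasDerivAt (fun θ ↦ a * cos θ ^ 2 + b * sin θ ^ 2) (2 * (b - a) * sin θ * cos θ) θ := by
  refine ((((hasDerivAt_cos θ).pow 2).const_mul a).add
    (((hasDerivAt_sin θ).pow 2).const_mul b)).congr_deriv ?_
  norm_num
  ring

/-- Substituting `x = a cos² θ + b sin² θ` turns the measure with density `arcsineWeight a b` into
`2 dθ`. -/
lemma deriv_mul_arcsineWeight {θ : ℝ} (hab : a < b) (hθ : θ ∈ Set.Ioo 0 (π / 2)) :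
    2 * (b - a) * sin θ * cos θ * arcsineWeight a b (a * cos θ ^ 2 + b * sin θ ^ 2) = 2 := by
  have hsin : 0 < sin θ := sin_pos_of_pos_of_lt_pi hθ.1 (by linarith [hθ.2, pi_pos])
  have hcos : 0 < cos θ := cos_pos_of_mem_Ioo ⟨by linarith [hθ.1, pi_pos], hθ.2⟩
  have hsub : 0 < b - a := sub_pos.2 hab
  have hright : b - (a * cos θ ^ 2 + b * sin θ ^ 2) = (b - a) * cos θ ^ 2 := by
    linear_combination -b * sin_sq_add_cos_sq θ
  have hleft : a * cos θ ^ 2 + b * sin θ ^ 2 - a = (b - a) * sin θ ^ 2 := by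
    linear_combination a * sin_sq_add_cos_sq θ
  rw [arcsineWeight, hright, hleft, sqrt_mul hsub.le, sqrt_mul hsub.le, sqrt_sq hsin.le,
    sqrt_sq hcos.le]
  field_simp
  rw [sq_sqrt hsub.le]

lemma deriv_smul_arcsineWeight_smul {θ : ℝ} (hab : a < b) (f : ℝ → E)
    (hθ : θ ∈ Set.Ioo 0 (π / 2)) :
    (2 * (b - a) * sin θ * cos θ) •
        ((fun x ↦ arcsineWeight a b x • f x) ∘ fun θ ↦ a * cos θ ^ 2 + b * sin θ ^ 2) θ =
      (2 : ℝ) • f (a * cos θ ^ 2 + b * sin θ ^ 2) := by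
  rw [Function.comp_apply, smul_smul, deriv_mul_arcsineWeight hab hθ]

lemma two_mul_sub_mul_sin_mul_cos_nonneg {θ : ℝ} (hab : a ≤ b) (hθ : θ ∈ Set.Ioo 0 (π / 2)) :
    0 ≤ 2 * (b - a) * sin θ * cos θ := by
  have hsin : 0 ≤ sin θ := sin_nonneg_of_nonneg_of_le_pi hθ.1.le (by linarith [hθ.2, pi_pos])
  have hcos : 0 ≤ cos θ := cos_nonneg_of_mem_Icc ⟨by linarith [hθ.1, pi_pos], hθ.2.le⟩
  exact mul_nonneg (mul_nonneg (mul_nonneg zero_le_two (sub_nonneg.2 hab)) hsin) hcos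

lemma integral_arcsineWeight_smul (hab : a < b) (f : ℝ → E) :
    ∫ x, arcsineWeight a b x • f x =
      ∫ θ in (0 : ℝ)..(π / 2), (2 : ℝ) • f (a * cos θ ^ 2 + b * sin θ ^ 2) := by
  have hsubst := integral_deriv_smul_comp_of_deriv_nonneg (a := 0) (b := π / 2)
    (f := fun θ ↦ a * cos θ ^ 2 + b * sin θ ^ 2) (g := fun x ↦ arcsineWeight a b x • f x)
    (by fun_prop) (fun θ _ ↦ hasDerivAt_mul_cos_sq_add_mul_sin_sq a b θ) fun θ hθ ↦
      two_mul_sub_mul_sin_mul_cos_nonneg hab.le (by simpa [pi_div_two_pos.le] using hθ)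
  rw [intervalIntegral.integral_congr_Ioo_of_le pi_div_two_pos.le fun θ hθ ↦
    deriv_smul_arcsineWeight_smul hab f hθ] at hsubst
  simpa [intervalIntegral.integral_eq_integral_of_support_subset
    (support_arcsineWeight_smul_subset f)] using hsubst.symm

lemma integrable_arcsineWeight_smul {f : ℝ → E} (hf : ContinuousOn f (Set.Icc a b)) :
    Integrable fun x ↦ arcsineWeight a b x • f x := by
  rcases le_or_gt b a with hba | hab
  · simp [arcsineWeight_of_endpoints_le hba]
  have hmaps (θ : ℝ) : a * cos θ ^ 2 + b * sin θ ^ 2 ∈ Set.Icc a b := by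
    rw [cos_sq']
    have hleft := mul_nonneg (sub_nonneg.2 hab.le) (sq_nonneg (sin θ))
    have hright := mul_nonneg (sub_nonneg.2 hab.le) (sub_nonneg.2 (sin_sq_le_one θ))
    constructor <;> linarith
  have hcont : Continuous fun θ ↦ (2 : ℝ) • f (a * cos θ ^ 2 + b * sin θ ^ 2) :=
    (hf.comp_continuous (by fun_prop) hmaps).const_smul _
  have hsubst := integrable_deriv_smul_comp_iff_of_deriv_nonneg (a := 0) (b := π / 2)
    (f := fun θ ↦ a * cos θ ^ 2 + b * sin θ ^ 2) (g := fun x ↦ arcsineWeight a b x • f x)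
    (by fun_prop) (fun θ _ ↦ hasDerivAt_mul_cos_sq_add_mul_sin_sq a b θ) fun θ hθ ↦
      two_mul_sub_mul_sin_mul_cos_nonneg hab.le (by simpa [pi_div_two_pos.le] using hθ)
  have hint := hsubst.1 <| (hcont.intervalIntegrable 0 (π / 2)).congr_uIoo fun θ hθ ↦
    (deriv_smul_arcsineWeight_smul hab f (by rwa [Set.uIoo_of_le pi_div_two_pos.le] at hθ)).symm
  rw [← integrableOn_iff_integrable_of_support_subset (support_arcsineWeight_smul_subset f)]
  simpa [intervalIntegrable_iff_integrableOn_Ioc_of_le, hab.le] using hint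

lemma integrable_arcsineWeight (a b : ℝ) : Integrable (arcsineWeight a b) := by
  simpa using integrable_arcsineWeight_smul (a := a) (b := b) (f := fun _ ↦ (1 : ℝ)) (by fun_prop)

lemma integral_arcsineWeight (hab : a < b) : ∫ x, arcsineWeight a b x = π := by
  simpa [mul_div_cancel₀] using integral_arcsineWeight_smul hab fun _ ↦ (1 : ℝ)

lemma integral_arcsineWeight_le_pi (a b : ℝ) : ∫ x, arcsineWeight a b x ≤ π := by
  rcases le_or_gt b a with hba | hab
  · simp [arcsineWeight_of_endpoints_le hba, pi_pos.le]
  · exact (integral_arcsineWeight hab).le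

end ArcsineWeight

section ComplexSqrt

lemma complexSqrt_sq (z : ℂ) : z.sqrt ^ 2 = z := by
  simp [Complex.sqrt]

lemma norm_complexSqrt (z : ℂ) : ‖z.sqrt‖ = √‖z‖ := by
  rw [← sqrt_sq (norm_nonneg z.sqrt), ← norm_pow, complexSqrt_sq]

lemma complexSqrt_ne_zero {z : ℂ} (hz : z ≠ 0) : z.sqrt ≠ 0 := by
  simpa [← norm_pos_iff, norm_complexSqrt] using hz

lemma measurable_complexSqrt : Measurable Complex.sqrt := by
  unfold Complex.sqrt
  fun_prop

lemma complexSqrt_of_im_nonneg {z : ℂ} (hz : 0 ≤ z.im) :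
    z.sqrt = √((‖z‖ + z.re) / 2) + √((‖z‖ - z.re) / 2) * Complex.I := by
  simp [Complex.sqrt_eq_real_add_ite, hz]

lemma re_complexSqrt_pos {z : ℂ} (hz : 0 < z.im) : 0 < z.sqrt.re := by
  have hre : |z.re| < ‖z‖ := Complex.abs_re_lt_norm.2 hz.ne'
  have hadd : 0 < ‖z‖ + z.re := by linarith [(abs_lt.1 hre).1]
  simpa [complexSqrt_of_im_nonneg hz.le] using hadd

lemma im_complexSqrt_pos {z : ℂ} (hz : 0 < z.im) : 0 < z.sqrt.im := by
  have hre : |z.re| < ‖z‖ := Complex.abs_re_lt_norm.2 hz.ne'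
  simp [complexSqrt_of_im_nonneg hz.le, (abs_lt.1 hre).2]

lemma re_complexSqrt_div_complexSqrt_pos {z w : ℂ} (hz : 0 < z.im) (hw : 0 < w.im) :
    0 < (z.sqrt / w.sqrt).re := by
  have hzre := re_complexSqrt_pos hz
  have hzim := im_complexSqrt_pos hz
  have hwre := re_complexSqrt_pos hw
  have hwim := im_complexSqrt_pos hw
  have hnorm : 0 < Complex.normSq w.sqrt :=
    Complex.normSq_pos.2 fun h ↦ hwre.ne' (by simp [h])
  rw [Complex.div_re]
  positivity

/-- Since `√y = 0` for `y ≤ 0`, exactly one of the two terms of the limit survives when `y ≠ 0`. -/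
lemma tendsto_complexSqrt_add_mul_I (y : ℝ) :
    Tendsto (fun ε : ℝ ↦ (y + ε * Complex.I : ℂ).sqrt) (𝓝[>] 0)
      (𝓝 (√y + √(-y) * Complex.I)) := by
  have hcont : Continuous fun ε : ℝ ↦
      (√((‖(y + ε * Complex.I : ℂ)‖ + y) / 2) +
        √((‖(y + ε * Complex.I : ℂ)‖ - y) / 2) * Complex.I : ℂ) := by fun_prop
  have hpos : √((|y| + y) / 2) = √y := by
    rcases le_total 0 y with h | h
    · rw [abs_of_nonneg h, add_self_div_two]
    · rw [abs_of_nonpos h, neg_add_cancel, zero_div, sqrt_zero, sqrt_eq_zero_of_nonpos h]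
  have hneg : √((|y| - y) / 2) = √(-y) := by
    rcases le_total 0 y with h | h
    · rw [abs_of_nonneg h, sub_self, zero_div, sqrt_zero, sqrt_eq_zero_of_nonpos (neg_nonpos.2 h)]
    · rw [abs_of_nonpos h, ← neg_add', neg_div, add_self_div_two]
  have hlim := hcont.tendsto 0
  simp only [Complex.ofReal_zero, zero_mul, add_zero, Complex.norm_real, norm_eq_abs, hpos,
    hneg] at hlim
  refine (hlim.mono_left nhdsWithin_le_nhds).congr' ?_
  filter_upwards [self_mem_nhdsWithin] with ε hε
  have him : 0 ≤ (y + ε * Complex.I : ℂ).im := by simpa using (Set.mem_Ioi.1 hε).le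
  simp [complexSqrt_of_im_nonneg him]

lemma inv_sqrt_add_sqrt_neg_mul_I (y : ℝ) :
    (√y + √(-y) * Complex.I : ℂ)⁻¹ = (√y : ℂ)⁻¹ - (√(-y) : ℂ)⁻¹ * Complex.I := by
  rcases le_total 0 y with h | h
  · simp [sqrt_eq_zero_of_nonpos (neg_nonpos.2 h)]
  · simp [sqrt_eq_zero_of_nonpos h, mul_comm]

end ComplexSqrt

section ArcsineCauchyTransform

lemma sub_ofReal_ne_zero_of_im_pos {z : ℂ} (hz : 0 < z.im) (x : ℝ) : z - x ≠ 0 := fun h ↦ by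
  simpa [hz.ne'] using congrArg Complex.im h

lemma cos_add_I_mul_sin_mem_slitPlane {c : ℂ} (hc : 0 < c.re) {θ : ℝ}
    (hθ : θ ∈ Set.Icc (-(π / 2)) (π / 2)) :
    (cos θ + Complex.I * c * sin θ : ℂ) ∈ Complex.slitPlane := by
  rw [Complex.mem_slitPlane_iff]
  by_cases hθ0 : sin θ = 0
  · have : θ = 0 := (sin_eq_zero_iff_of_lt_of_lt (by linarith [hθ.1, pi_pos])
      (by linarith [hθ.2, pi_pos])).1 hθ0
    simp [this]
  · right
    simp [-Complex.ofReal_sin, -Complex.ofReal_cos, hθ0, hc.ne']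

lemma cos_sub_I_mul_sin_mem_slitPlane {c : ℂ} (hc : 0 < c.re) {θ : ℝ}
    (hθ : θ ∈ Set.Icc (-(π / 2)) (π / 2)) :
    (cos θ - Complex.I * c * sin θ : ℂ) ∈ Complex.slitPlane := by
  simpa [sub_eq_add_neg] using
    cos_add_I_mul_sin_mem_slitPlane hc (θ := -θ) ⟨by linarith [hθ.2], by linarith [hθ.1]⟩

lemma cos_sq_add_sq_mul_sin_sq_eq_mul (c : ℂ) (θ : ℝ) :
    (cos θ ^ 2 + c ^ 2 * sin θ ^ 2 : ℂ) =
      (cos θ + Complex.I * c * sin θ) * (cos θ - Complex.I * c * sin θ) := by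
  linear_combination c ^ 2 * (sin θ : ℂ) ^ 2 * Complex.I_sq

/-- A branch of `arctan (c tan θ) / c` that stays continuous up to `θ = ± π / 2`. -/
noncomputable def arctanMulTan (c : ℂ) (θ : ℝ) : ℂ :=
  (Complex.log (cos θ + Complex.I * c * sin θ) - Complex.log (cos θ - Complex.I * c * sin θ)) /
    (2 * Complex.I * c)

lemma hasDerivAt_arctanMulTan {c : ℂ} (hc : 0 < c.re) {θ : ℝ}
    (hθ : θ ∈ Set.Icc (-(π / 2)) (π / 2)) :
    HasDerivAt (arctanMulTan c) (cos θ ^ 2 + c ^ 2 * sin θ ^ 2 : ℂ)⁻¹ θ := by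
  have hadd := cos_add_I_mul_sin_mem_slitPlane hc hθ
  have hsub := cos_sub_I_mul_sin_mem_slitPlane hc hθ
  have hadd0 := Complex.slitPlane_ne_zero hadd
  have hsub0 := Complex.slitPlane_ne_zero hsub
  have hc0 : c ≠ 0 := fun h ↦ hc.ne' (by simp [h])
  have hcos := (hasDerivAt_cos θ).ofReal_comp
  have hsin := ((hasDerivAt_sin θ).ofReal_comp).const_mul (Complex.I * c)
  have hone : (sin θ : ℂ) ^ 2 + (cos θ : ℂ) ^ 2 = 1 := by exact_mod_cast sin_sq_add_cos_sq θ
  refine ((((hcos.add hsin).clog_real hadd).sub ((hcos.sub hsin).clog_real hsub)).div_const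
    (2 * Complex.I * c)).congr_deriv ?_
  rw [cos_sq_add_sq_mul_sin_sq_eq_mul, Pi.add_apply, Pi.sub_apply, div_sub_div _ _ hadd0 hsub0,
    div_div, inv_eq_one_div, div_eq_div_iff
      (mul_ne_zero (mul_ne_zero hadd0 hsub0) (by simp [hc0])) (mul_ne_zero hadd0 hsub0)]
  push_cast at hone ⊢
  linear_combination (2 * Complex.I * c * ((Complex.cos θ + Complex.I * c * Complex.sin θ) *
    (Complex.cos θ - Complex.I * c * Complex.sin θ))) * hone

lemma integral_inv_cos_sq_add_sq_mul_sin_sq {c : ℂ} (hc : 0 < c.re) :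
    ∫ θ in (0 : ℝ)..(π / 2), (cos θ ^ 2 + c ^ 2 * sin θ ^ 2 : ℂ)⁻¹ = π / (2 * c) := by
  have hIcc {θ : ℝ} (hθ : θ ∈ Set.uIcc 0 (π / 2)) : θ ∈ Set.Icc (-(π / 2)) (π / 2) := by
    rw [Set.uIcc_of_le pi_div_two_pos.le] at hθ
    exact ⟨by linarith [hθ.1, pi_pos], hθ.2⟩
  have hne {θ : ℝ} (hθ : θ ∈ Set.uIcc 0 (π / 2)) : (cos θ ^ 2 + c ^ 2 * sin θ ^ 2 : ℂ) ≠ 0 := by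
    rw [cos_sq_add_sq_mul_sin_sq_eq_mul]
    exact mul_ne_zero (Complex.slitPlane_ne_zero (cos_add_I_mul_sin_mem_slitPlane hc (hIcc hθ)))
      (Complex.slitPlane_ne_zero (cos_sub_I_mul_sin_mem_slitPlane hc (hIcc hθ)))
  have hint : IntervalIntegrable (fun θ : ℝ ↦ (cos θ ^ 2 + c ^ 2 * sin θ ^ 2 : ℂ)⁻¹)
      volume 0 (π / 2) :=
    (ContinuousOn.inv₀ (by fun_prop) fun θ hθ ↦ hne hθ).intervalIntegrable
  have hlog : Complex.log (-(Complex.I * c)) = Complex.log (Complex.I * c) - π * Complex.I := by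
    rw [Complex.log, Complex.log, norm_neg,
      Complex.arg_neg_eq_arg_sub_pi_of_im_pos (by simpa using hc)]
    push_cast
    ring
  have hc0 : c ≠ 0 := fun h ↦ hc.ne' (by simp [h])
  rw [integral_eq_sub_of_hasDerivAt (fun θ hθ ↦ hasDerivAt_arctanMulTan hc (hIcc hθ)) hint]
  simp only [arctanMulTan, cos_pi_div_two, sin_pi_div_two, cos_zero, sin_zero, Complex.ofReal_zero,
    Complex.ofReal_one, mul_zero, mul_one, zero_add, add_zero, zero_sub, sub_zero, sub_self,
    zero_div, hlog]
  field_simp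
  ring

lemma integral_arcsineWeight_smul_inv_sub {a b : ℝ} (hab : a < b) {z : ℂ} (hz : 0 < z.im) :
    ∫ x : ℝ, arcsineWeight a b x • (z - x)⁻¹ = π * ((z - a).sqrt)⁻¹ * ((z - b).sqrt)⁻¹ := by
  set c : ℂ := (z - b).sqrt / (z - a).sqrt with hc_def
  have hc : 0 < c.re := re_complexSqrt_div_complexSqrt_pos (by simpa) (by simpa)
  have ha := complexSqrt_ne_zero (sub_ofReal_ne_zero_of_im_pos hz a)
  have hb := complexSqrt_ne_zero (sub_ofReal_ne_zero_of_im_pos hz b)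
  have hc_sq : (z - a) * c ^ 2 = z - b := by
    rw [hc_def, div_pow, complexSqrt_sq, complexSqrt_sq,
      mul_div_cancel₀ _ (sub_ofReal_ne_zero_of_im_pos hz a)]
  have hintegrand (θ : ℝ) : (2 : ℝ) • (z - (a * cos θ ^ 2 + b * sin θ ^ 2 : ℝ))⁻¹ =
      2 * (z - a)⁻¹ * (cos θ ^ 2 + c ^ 2 * sin θ ^ 2 : ℂ)⁻¹ := by
    have hone : (sin θ : ℂ) ^ 2 + (cos θ : ℂ) ^ 2 = 1 := by exact_mod_cast sin_sq_add_cos_sq θ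
    rw [Complex.real_smul, mul_assoc, ← mul_inv, Complex.ofReal_ofNat]
    congr 2
    push_cast at hone ⊢
    linear_combination -z * hone - Complex.sin θ ^ 2 * hc_sq
  rw [integral_arcsineWeight_smul hab]
  simp only [hintegrand]
  rw [intervalIntegral.integral_const_mul, integral_inv_cos_sq_add_sq_mul_sin_sq hc, hc_def]
  nth_rewrite 1 [← complexSqrt_sq (z - a)]
  field_simp

end ArcsineCauchyTransform

section AbelTransform

/-- The left-sided Abel transform `∫_{s < x} w s / √(x - s) ds`, a half-order integral of `w`. The
convention `(√y)⁻¹ = 0` for `y ≤ 0` does the truncation to `s < x`. -/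
noncomputable def leftAbelTransform (w : ℝ → ℝ) (x : ℝ) : ℝ := ∫ s, w s * (√(x - s))⁻¹

/-- The right-sided Abel transform `∫_{t > x} w t / √(t - x) dt`, truncated like
`leftAbelTransform`. -/
noncomputable def rightAbelTransform (w : ℝ → ℝ) (x : ℝ) : ℝ := ∫ t, w t * (√(t - x))⁻¹

/-- The Abel transform `∫ w s / √(z - s) ds` on the upper half-plane, whose boundary values combine
the two one-sided transforms. -/
noncomputable def complexAbelTransform (w : ℝ → ℝ) (z : ℂ) : ℂ := ∫ s, w s • ((z - s).sqrt)⁻¹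

lemma norm_inv_sub_ofReal_le {z : ℂ} (hz : 0 < z.im) (x : ℝ) : ‖(z - x)⁻¹‖ ≤ z.im⁻¹ := by
  rw [norm_inv]
  gcongr
  simpa using (le_abs_self _).trans (Complex.abs_im_le_norm (z - x))

lemma norm_inv_complexSqrt_sub_ofReal_le {z : ℂ} (hz : 0 < z.im) (x : ℝ) :
    ‖((z - x).sqrt)⁻¹‖ ≤ √z.im⁻¹ := by
  rw [norm_inv, norm_complexSqrt, ← sqrt_inv, ← norm_inv]
  exact sqrt_le_sqrt (norm_inv_sub_ofReal_le hz x)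

variable {w : ℝ → ℝ} {z : ℂ}

lemma measurable_inv_complexSqrt_sub_ofReal (z : ℂ) :
    Measurable fun s : ℝ ↦ ((z - s).sqrt)⁻¹ :=
  (measurable_complexSqrt.comp (by fun_prop)).inv

lemma integrable_smul_inv_complexSqrt_sub (hw : Integrable w) (hz : 0 < z.im) :
    Integrable fun s : ℝ ↦ w s • ((z - s).sqrt)⁻¹ :=
  hw.smul_bdd √z.im⁻¹ (measurable_inv_complexSqrt_sub_ofReal z).aestronglyMeasurable
    (.of_forall fun s ↦ norm_inv_complexSqrt_sub_ofReal_le hz s)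

lemma aestronglyMeasurable_mul_arcsineWeight (hw : AEStronglyMeasurable w) :
    AEStronglyMeasurable (fun p : ℝ × ℝ × ℝ ↦ w p.2.1 * w p.2.2 * arcsineWeight p.2.1 p.2.2 p.1)
      (volume.prod (volume.prod volume)) :=
  (hw.comp_fst.mul hw.comp_snd).comp_snd.mul measurable_arcsineWeight.aestronglyMeasurable

lemma integrable_mul_arcsineWeight (hw : Integrable w) :
    Integrable (fun p : ℝ × ℝ × ℝ ↦ w p.2.1 * w p.2.2 * arcsineWeight p.2.1 p.2.2 p.1)
      (volume.prod (volume.prod volume)) := by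
  have hmeas := aestronglyMeasurable_mul_arcsineWeight hw.aestronglyMeasurable
  refine (integrable_prod_iff' hmeas).2
    ⟨.of_forall fun p ↦ (integrable_arcsineWeight p.1 p.2).const_mul (w p.1 * w p.2), ?_⟩
  refine ((hw.mul_prod hw).norm.mul_const π).mono' hmeas.norm.prod_swap.integral_prod_right'
    (.of_forall fun p ↦ ?_)
  rw [norm_of_nonneg (integral_nonneg fun _ ↦ norm_nonneg _)]
  simp only [norm_mul (w p.1 * w p.2), norm_of_nonneg (arcsineWeight_nonneg _ _ _),
    MeasureTheory.integral_const_mul]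
  gcongr
  exact integral_arcsineWeight_le_pi p.1 p.2

lemma integral_mul_arcsineWeight (w : ℝ → ℝ) (x : ℝ) :
    ∫ p : ℝ × ℝ, w p.1 * w p.2 * arcsineWeight p.1 p.2 x =
      leftAbelTransform w x * rightAbelTransform w x := by
  rw [leftAbelTransform, rightAbelTransform, ← integral_prod_mul]
  refine integral_congr_ae (.of_forall fun p ↦ ?_)
  simp only [arcsineWeight]
  ring

lemma integrable_leftAbelTransform_mul_rightAbelTransform (hw : Integrable w) :
    Integrable fun x ↦ leftAbelTransform w x * rightAbelTransform w x := by
  simpa only [← Measure.volume_eq_prod, integral_mul_arcsineWeight] using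
    (integrable_mul_arcsineWeight hw).integral_prod_left

lemma setIntegral_fst_lt_snd_mul {𝕜 : Type*} [RCLike 𝕜] {μ : Measure ℝ} [SFinite μ]
    [NullSingletonClass μ] {f : ℝ → 𝕜} (hf : Integrable f μ) :
    ∫ p in {p : ℝ × ℝ | p.1 < p.2}, f p.1 * f p.2 ∂μ.prod μ = (∫ x, f x ∂μ) ^ 2 / 2 := by
  have hlt : MeasurableSet {p : ℝ × ℝ | p.1 < p.2} := measurableSet_lt measurable_fst measurable_snd
  have hgt : MeasurableSet {p : ℝ × ℝ | p.2 < p.1} := measurableSet_lt measurable_snd measurable_fst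
  have hdiag : ∀ᵐ p ∂μ.prod μ, p.1 ≠ p.2 :=
    (Measure.ae_prod_iff_ae_ae (measurableSet_eq_fun measurable_fst measurable_snd).compl).2
      (.of_forall fun x ↦ (Measure.ae_ne μ x).mono fun y hy ↦ hy.symm)
  have hcompl : ∫ p in {p : ℝ × ℝ | p.1 < p.2}ᶜ, f p.1 * f p.2 ∂μ.prod μ =
      ∫ p in {p : ℝ × ℝ | p.2 < p.1}, f p.1 * f p.2 ∂μ.prod μ :=
    setIntegral_congr_set <| hdiag.mono fun p hp ↦
      propext (not_lt.trans hp.symm.le_iff_lt)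
  have hswap : ∫ p in {p : ℝ × ℝ | p.2 < p.1}, f p.1 * f p.2 ∂μ.prod μ =
      ∫ p in {p : ℝ × ℝ | p.1 < p.2}, f p.1 * f p.2 ∂μ.prod μ := by
    rw [← MeasureTheory.integral_indicator hlt, ← MeasureTheory.integral_indicator hgt,
      ← integral_prod_swap]
    simp [Set.indicator, mul_comm]
  have hsum := integral_add_compl hlt (hf.mul_prod hf)
  rw [hcompl, hswap, integral_prod_mul] at hsum
  linear_combination hsum / 2

lemma integral_mul_arcsineWeight_smul_inv_sub (w : ℝ → ℝ) (hz : 0 < z.im) (p : ℝ × ℝ) :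
    ∫ x : ℝ, (w p.1 * w p.2 * arcsineWeight p.1 p.2 x) • (z - x)⁻¹ =
      Set.indicator {p : ℝ × ℝ | p.1 < p.2} (fun p ↦ π *
        ((w p.1 • ((z - p.1).sqrt)⁻¹) * (w p.2 • ((z - p.2).sqrt)⁻¹))) p := by
  simp only [mul_smul (w p.1 * w p.2), MeasureTheory.integral_smul]
  by_cases hp : p.1 < p.2
  · rw [Set.indicator_of_mem (by exact hp), integral_arcsineWeight_smul_inv_sub hp hz]
    simp only [Complex.real_smul]
    push_cast
    ring
  · rw [Set.indicator_of_notMem (by exact hp)]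
    simp [arcsineWeight_of_endpoints_le (not_lt.1 hp)]

lemma integral_leftAbelTransform_mul_rightAbelTransform_smul_inv_sub (hw : Integrable w)
    (hz : 0 < z.im) :
    ∫ x : ℝ, (leftAbelTransform w x * rightAbelTransform w x) • (z - x)⁻¹ =
      π / 2 * complexAbelTransform w z ^ 2 := by
  have hint : Integrable (fun p : ℝ × ℝ × ℝ ↦
      (w p.2.1 * w p.2.2 * arcsineWeight p.2.1 p.2.2 p.1) • (z - p.1)⁻¹)
      (volume.prod (volume.prod volume)) :=
    (integrable_mul_arcsineWeight hw).smul_bdd z.im⁻¹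
      (by fun_prop : Measurable fun p : ℝ × ℝ × ℝ ↦ (z - p.1)⁻¹).aestronglyMeasurable
      (.of_forall fun p ↦ norm_inv_sub_ofReal_le hz p.1)
  calc ∫ x : ℝ, (leftAbelTransform w x * rightAbelTransform w x) • (z - x)⁻¹
      = ∫ x : ℝ, ∫ p : ℝ × ℝ, (w p.1 * w p.2 * arcsineWeight p.1 p.2 x) • (z - x)⁻¹ := by
        simp only [_root_.integral_smul_const, integral_mul_arcsineWeight]
    _ = ∫ p : ℝ × ℝ, ∫ x : ℝ, (w p.1 * w p.2 * arcsineWeight p.1 p.2 x) • (z - x)⁻¹ :=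
        integral_integral_swap hint
    _ = π * ∫ p in {p : ℝ × ℝ | p.1 < p.2},
          (w p.1 • ((z - p.1).sqrt)⁻¹) * (w p.2 • ((z - p.2).sqrt)⁻¹) := by
        simp only [integral_mul_arcsineWeight_smul_inv_sub w hz]
        rw [MeasureTheory.integral_indicator (measurableSet_lt measurable_fst measurable_snd),
          MeasureTheory.integral_const_mul]
    _ = π / 2 * complexAbelTransform w z ^ 2 := by
        rw [Measure.volume_eq_prod, setIntegral_fst_lt_snd_mul
          (integrable_smul_inv_complexSqrt_sub hw hz), complexAbelTransform]
        ring

end AbelTransform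

section BoundaryValue

variable {w : ℝ → ℝ} {x : ℝ}

lemma norm_inv_complexSqrt_add_mul_I_le {y : ℝ} (hy : y ≠ 0) (ε : ℝ) :
    ‖((y + ε * Complex.I : ℂ).sqrt)⁻¹‖ ≤ (√y)⁻¹ + (√(-y))⁻¹ := by
  have habs : (√|y|)⁻¹ ≤ (√y)⁻¹ + (√(-y))⁻¹ := by
    rcases abs_choice y with h | h <;> rw [h] <;> simp
  refine le_trans ?_ habs
  rw [norm_inv, norm_complexSqrt]
  gcongr
  simpa using Complex.abs_re_le_norm (y + ε * Complex.I : ℂ)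

lemma tendsto_inv_complexSqrt_add_mul_I {y : ℝ} (hy : y ≠ 0) :
    Tendsto (fun ε : ℝ ↦ ((y + ε * Complex.I : ℂ).sqrt)⁻¹) (𝓝[>] 0)
      (𝓝 (√y + √(-y) * Complex.I : ℂ)⁻¹) := by
  refine (tendsto_complexSqrt_add_mul_I y).inv₀ fun h ↦ hy ?_
  have hre : √y = 0 := by simpa using congrArg Complex.re h
  have him : √(-y) = 0 := by simpa using congrArg Complex.im h
  linarith [sqrt_eq_zero'.1 hre, sqrt_eq_zero'.1 him]

lemma integral_smul_inv_sqrt_add_sqrt_neg_mul_I (hleft : Integrable fun s ↦ w s * (√(x - s))⁻¹)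
    (hright : Integrable fun t ↦ w t * (√(t - x))⁻¹) :
    ∫ s : ℝ, w s • (√(x - s) + √(-(x - s)) * Complex.I : ℂ)⁻¹ =
      leftAbelTransform w x - rightAbelTransform w x * Complex.I := by
  rw [leftAbelTransform, rightAbelTransform, ← integral_complex_ofReal, ← integral_complex_ofReal,
    ← MeasureTheory.integral_mul_const, ← MeasureTheory.integral_sub hleft.ofReal
      (hright.ofReal.mul_const _)]
  congr with s
  rw [inv_sqrt_add_sqrt_neg_mul_I, neg_sub, Complex.real_smul]
  push_cast
  ring

lemma tendsto_complexAbelTransform (hw : AEStronglyMeasurable w)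
    (hleft : Integrable fun s ↦ w s * (√(x - s))⁻¹)
    (hright : Integrable fun t ↦ w t * (√(t - x))⁻¹) :
    Tendsto (fun ε : ℝ ↦ complexAbelTransform w (x + ε * Complex.I)) (𝓝[>] 0)
      (𝓝 (leftAbelTransform w x - rightAbelTransform w x * Complex.I)) := by
  have hshift (ε s : ℝ) : (x + ε * Complex.I - s : ℂ) = (x - s : ℝ) + ε * Complex.I := by
    push_cast
    ring
  have hae : ∀ᵐ s : ℝ, x - s ≠ 0 :=
    (Measure.ae_ne volume x).mono fun s hs ↦ sub_ne_zero.2 hs.symm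
  rw [← integral_smul_inv_sqrt_add_sqrt_neg_mul_I hleft hright]
  refine tendsto_integral_filter_of_dominated_convergence
    (fun s ↦ ‖w s * (√(x - s))⁻¹‖ + ‖w s * (√(s - x))⁻¹‖)
    (.of_forall fun ε ↦ hw.smul (measurable_inv_complexSqrt_sub_ofReal _).aestronglyMeasurable)
    (.of_forall fun ε ↦ hae.mono fun s hs ↦ ?_) (hleft.norm.add hright.norm)
    (hae.mono fun s hs ↦ ?_)
  · have hbound := norm_inv_complexSqrt_add_mul_I_le hs ε
    rw [neg_sub] at hbound
    rw [norm_smul, hshift, norm_mul, norm_mul, norm_of_nonneg (by positivity : 0 ≤ (√(x - s))⁻¹),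
      norm_of_nonneg (by positivity : 0 ≤ (√(s - x))⁻¹), ← mul_add]
    gcongr
  · simpa only [hshift] using (tendsto_inv_complexSqrt_add_mul_I hs).const_smul (w s)

end BoundaryValue

section ApproximateIdentity

variable {E : Type*} [NormedAddCommGroup E] [NormedSpace ℝ E] {f : ℝ → E} {x C : ℝ}

lemma integrable_dilation_smul {κ : ℝ → ℝ} (hκ : Measurable κ)
    (hκC : ∀ u, |κ u| ≤ C * (1 + u ^ 2)⁻¹) (hf : Integrable f) (c : ℝ) :
    Integrable fun ξ ↦ (c * κ (c * (x - ξ))) • f ξ := by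
  have hC : 0 ≤ C := by simpa using (abs_nonneg _).trans (hκC 0)
  have hmeas : Measurable fun ξ ↦ c * κ (c * (x - ξ)) := by fun_prop
  refine hf.bdd_smul (|c| * C) hmeas.aestronglyMeasurable (.of_forall fun ξ ↦ ?_)
  rw [norm_mul, norm_eq_abs, norm_eq_abs]
  gcongr
  exact (hκC _).trans (mul_le_of_le_one_right hC (inv_le_one_of_one_le₀ (by simp [sq_nonneg])))

lemma tendsto_norm_mul_of_le_mul_inv_one_add_sq {φ : ℝ → ℝ} (hφ : ∀ u, 0 ≤ φ u)
    (hφC : ∀ u, φ u ≤ C * (1 + u ^ 2)⁻¹) :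
    Tendsto (fun u : ℝ ↦ ‖u‖ * φ u) (Bornology.cobounded ℝ) (𝓝 0) := by
  have hC : 0 ≤ C := by simpa using (hφ 0).trans (hφC 0)
  have hlim : Tendsto (fun u : ℝ ↦ C * ‖u‖⁻¹) (Bornology.cobounded ℝ) (𝓝 0) := by
    simpa using (tendsto_inv_atTop_zero.comp (tendsto_norm_cobounded_atTop (E := ℝ))).const_mul C
  refine squeeze_zero (fun u ↦ mul_nonneg (norm_nonneg u) (hφ u)) (fun u ↦ ?_) hlim
  have hu : ‖u‖ * (1 + u ^ 2)⁻¹ ≤ ‖u‖⁻¹ := by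
    rcases eq_or_ne u 0 with rfl | hu
    · simp
    · rw [← div_eq_mul_inv, ← one_div, div_le_div_iff₀ (by positivity) (norm_pos_iff.2 hu),
        norm_eq_abs, ← sq, sq_abs]
      linarith
  calc ‖u‖ * φ u
      ≤ ‖u‖ * (C * (1 + u ^ 2)⁻¹) := by gcongr; exact hφC u
    _ = C * (‖u‖ * (1 + u ^ 2)⁻¹) := by ring
    _ ≤ C * ‖u‖⁻¹ := by gcongr

variable [CompleteSpace E]

lemma tendsto_integral_dilation_smul_of_nonneg {φ : ℝ → ℝ} (hφ : ∀ u, 0 ≤ φ u)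
    (hφC : ∀ u, φ u ≤ C * (1 + u ^ 2)⁻¹) (hpos : 0 < ∫ u, φ u) (hf : Integrable f)
    (hfx : ContinuousAt f x) :
    Tendsto (fun c ↦ ∫ ξ, (c * φ (c * (x - ξ))) • f ξ) atTop (𝓝 ((∫ u, φ u) • f x)) := by
  set m := ∫ u, φ u with hm
  have hdecay : Tendsto (fun u : ℝ ↦ ‖u‖ ^ Module.finrank ℝ ℝ * (m⁻¹ * φ u))
      (Bornology.cobounded ℝ) (𝓝 0) := by
    simpa [mul_left_comm] using (tendsto_norm_mul_of_le_mul_inv_one_add_sq hφ hφC).const_mul m⁻¹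
  have hpeak := tendsto_integral_comp_smul_smul_of_integrable' (μ := volume)
    (φ := fun u ↦ m⁻¹ * φ u) (fun u ↦ mul_nonneg (inv_nonneg.2 hpos.le) (hφ u))
    (by rw [MeasureTheory.integral_const_mul, ← hm, inv_mul_cancel₀ hpos.ne']) hdecay hf hfx
  refine (hpeak.const_smul m).congr fun c ↦ ?_
  rw [← MeasureTheory.integral_smul]
  congr with ξ
  rw [smul_smul, Module.finrank_self, pow_one, smul_eq_mul]
  congr 1
  field_simp

/-- Adding a large multiple of `(1 + u²)⁻¹` makes the kernel nonnegative. -/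
lemma tendsto_integral_dilation_smul {κ : ℝ → ℝ} (hκ : Measurable κ)
    (hκC : ∀ u, |κ u| ≤ C * (1 + u ^ 2)⁻¹) (hf : Integrable f) (hfx : ContinuousAt f x) :
    Tendsto (fun c ↦ ∫ ξ, (c * κ (c * (x - ξ))) • f ξ) atTop (𝓝 ((∫ u, κ u) • f x)) := by
  set P : ℝ → ℝ := fun u ↦ (C + 1) * (1 + u ^ 2)⁻¹
  have hC : 0 ≤ C := by simpa using (abs_nonneg _).trans (hκC 0)
  have hP (u : ℝ) : |P u| ≤ (C + 1) * (1 + u ^ 2)⁻¹ := (abs_of_nonneg (by positivity)).le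
  have hPint : Integrable P := integrable_inv_one_add_sq.const_mul (C + 1)
  have hκint : Integrable κ := (integrable_inv_one_add_sq.const_mul C).mono'
    hκ.aestronglyMeasurable (.of_forall hκC)
  have hκP (u : ℝ) : (1 + u ^ 2)⁻¹ ≤ κ u + P u := by
    linarith [(abs_le.1 (hκC u)).1, show P u = C * (1 + u ^ 2)⁻¹ + (1 + u ^ 2)⁻¹ by ring]
  have hκPpos : 0 < ∫ u, κ u + P u :=
    pi_pos.trans_le <| integral_univ_inv_one_add_sq.symm.le.trans <|
      integral_mono integrable_inv_one_add_sq (hκint.add hPint) hκP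
  have hPpos : 0 < ∫ u, P u := by
    rw [MeasureTheory.integral_const_mul, integral_univ_inv_one_add_sq]
    positivity
  have hlimκP := tendsto_integral_dilation_smul_of_nonneg (C := 2 * C + 1)
    (fun u ↦ le_trans (by positivity) (hκP u))
    (fun u ↦ by linarith [(abs_le.1 (hκC u)).2, show P u = (C + 1) * (1 + u ^ 2)⁻¹ from rfl])
    hκPpos hf hfx
  have hlimP := tendsto_integral_dilation_smul_of_nonneg (fun u ↦ by positivity)
    (fun u ↦ (le_abs_self _).trans (hP u)) hPpos hf hfx
  have hlim := hlimκP.sub hlimP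
  rw [← sub_smul, MeasureTheory.integral_add hκint hPint, add_sub_cancel_right] at hlim
  refine hlim.congr fun c ↦ ?_
  simp only [mul_add, add_smul]
  rw [MeasureTheory.integral_add (integrable_dilation_smul hκ hκC hf c)
    (integrable_dilation_smul (by fun_prop) hP hf c), add_sub_cancel_right]

end ApproximateIdentity

section PrincipalValue

/-- The difference between the kernel `1 / u` truncated to `1 < |u|` and the real part
`u / (1 + u²)` of `1 / (u + i)`. -/
noncomputable def truncationDefect (u : ℝ) : ℝ := (if 1 < |u| then u⁻¹ else 0) - u / (1 + u ^ 2)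

lemma measurable_truncationDefect : Measurable truncationDefect :=
  (Measurable.ite (measurableSet_lt measurable_const (by fun_prop)) measurable_inv
    measurable_const).sub (by fun_prop)

lemma truncationDefect_neg (u : ℝ) : truncationDefect (-u) = -truncationDefect u := by
  rw [truncationDefect, truncationDefect, abs_neg, neg_sq]
  split_ifs <;> ring

lemma abs_truncationDefect_le (u : ℝ) : |truncationDefect u| ≤ (1 + u ^ 2)⁻¹ := by
  rw [truncationDefect]
  split_ifs with hu
  · have hu0 : u ≠ 0 := fun h ↦ by norm_num [h] at hu
    have hdiff : u⁻¹ - u / (1 + u ^ 2) = u⁻¹ * (1 + u ^ 2)⁻¹ := by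
      field_simp
      ring
    rw [hdiff, abs_mul, abs_inv, abs_of_pos (by positivity : 0 < (1 + u ^ 2)⁻¹)]
    exact mul_le_of_le_one_left (by positivity) (inv_le_one_of_one_le₀ hu.le)
  · rw [zero_sub, abs_neg, div_eq_mul_inv, abs_mul, abs_of_pos (by positivity : 0 < (1 + u ^ 2)⁻¹)]
    exact mul_le_of_le_one_left (by positivity) (not_lt.1 hu)

lemma integral_truncationDefect : ∫ u, truncationDefect u = 0 := by
  have hodd := integral_neg_eq_self truncationDefect volume
  simp only [truncationDefect_neg, MeasureTheory.integral_neg] at hodd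
  linarith

lemma inv_mul_truncationDefect {ε : ℝ} (hε : 0 < ε) (y : ℝ) :
    ε⁻¹ * truncationDefect (ε⁻¹ * y) =
      (if ε < |y| then y⁻¹ else 0) - ((y + ε * Complex.I : ℂ)⁻¹).re := by
  have hre : ((y + ε * Complex.I : ℂ)⁻¹).re = y / (y ^ 2 + ε ^ 2) := by
    simp [Complex.inv_re, Complex.normSq_apply, sq]
  have hiff : 1 < |ε⁻¹ * y| ↔ ε < |y| := by
    rw [abs_mul, abs_of_pos (inv_pos.2 hε), lt_inv_mul_iff₀ hε, mul_one]
  rw [truncationDefect, hre, mul_sub]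
  simp only [hiff]
  congr 1
  · split_ifs
    · field_simp
    · rw [mul_zero]
  · field_simp
    ring

lemma integral_truncated_div_sub_eq {f : ℝ → ℝ} (hf : Integrable f) {ε : ℝ} (hε : 0 < ε) (x : ℝ) :
    ∫ ξ in {ξ | ε < |ξ - x|}, f ξ / (x - ξ) =
      (∫ ξ, (ε⁻¹ * truncationDefect (ε⁻¹ * (x - ξ))) • f ξ) +
        (∫ ξ : ℝ, f ξ • (x + ε * Complex.I - ξ)⁻¹).re := by
  have hcauchy : Integrable fun ξ : ℝ ↦ f ξ • (x + ε * Complex.I - ξ)⁻¹ :=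
    hf.smul_bdd ε⁻¹ (by fun_prop :
      Measurable fun ξ : ℝ ↦ (x + ε * Complex.I - ξ)⁻¹).aestronglyMeasurable
      (.of_forall fun ξ ↦ by
        simpa using norm_inv_sub_ofReal_le (z := x + ε * Complex.I) (by simpa) ξ)
  rw [← RCLike.re_eq_complex_re, ← integral_re hcauchy, ← MeasureTheory.integral_add
    (integrable_dilation_smul measurable_truncationDefect
      (fun u ↦ (abs_truncationDefect_le u).trans_eq (one_mul _).symm) hf _) hcauchy.re,
    ← MeasureTheory.integral_indicator (measurableSet_lt measurable_const (by fun_prop))]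
  congr with ξ
  rw [inv_mul_truncationDefect hε, Set.indicator_apply]
  simp only [Set.mem_ofPred_eq, abs_sub_comm ξ x, RCLike.re_eq_complex_re, Complex.smul_re,
    smul_eq_mul, Complex.ofReal_sub, sub_add_eq_add_sub]
  split_ifs <;> ring

lemma tendsto_integral_truncated_div_sub {f : ℝ → ℝ} (hf : Integrable f) {x : ℝ}
    (hfx : ContinuousAt f x) {L : ℂ}
    (hL : Tendsto (fun ε : ℝ ↦ ∫ ξ : ℝ, f ξ • (x + ε * Complex.I - ξ)⁻¹) (𝓝[>] 0) (𝓝 L)) :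
    Tendsto (fun ε ↦ ∫ ξ in {ξ | ε < |ξ - x|}, f ξ / (x - ξ)) (𝓝[>] 0) (𝓝 L.re) := by
  have hdefect := (tendsto_integral_dilation_smul measurable_truncationDefect
    (fun u ↦ (abs_truncationDefect_le u).trans_eq (one_mul _).symm) hf hfx).comp
      tendsto_inv_nhdsGT_zero
  have hsum := hdefect.add ((Complex.continuous_re.tendsto L).comp hL)
  rw [integral_truncationDefect, zero_smul, zero_add] at hsum
  refine hsum.congr' ?_
  filter_upwards [self_mem_nhdsWithin] with ε hε
  exact (integral_truncated_div_sub_eq hf hε x).symm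

theorem tendsto_integral_truncated_leftAbelTransform_mul_rightAbelTransform {w : ℝ → ℝ}
    {x : ℝ} (hw : Integrable w) (hleft : Integrable fun s ↦ w s * (√(x - s))⁻¹)
    (hright : Integrable fun t ↦ w t * (√(t - x))⁻¹)
    (hcont : ContinuousAt (fun ξ ↦ leftAbelTransform w ξ * rightAbelTransform w ξ) x) :
    Tendsto (fun ε ↦ ∫ ξ in {ξ | ε < |ξ - x|},
        leftAbelTransform w ξ * rightAbelTransform w ξ / (x - ξ)) (𝓝[>] 0)
      (𝓝 (π / 2 * (leftAbelTransform w x ^ 2 - rightAbelTransform w x ^ 2))) := by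
  have hre : π / 2 * (leftAbelTransform w x ^ 2 - rightAbelTransform w x ^ 2) =
      (π / 2 * (leftAbelTransform w x - rightAbelTransform w x * Complex.I) ^ 2 : ℂ).re := by
    simp [sq, ← Complex.ofReal_ofNat, ← Complex.ofReal_div]
  rw [hre]
  refine tendsto_integral_truncated_div_sub
    (integrable_leftAbelTransform_mul_rightAbelTransform hw) hcont ?_
  have hboundary := tendsto_complexAbelTransform hw.aestronglyMeasurable hleft hright
  refine ((hboundary.pow 2).const_mul (π / 2 : ℂ)).congr' ?_
  filter_upwards [self_mem_nhdsWithin] with ε hε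
  exact (integral_leftAbelTransform_mul_rightAbelTransform_smul_inv_sub hw (by simpa using hε)).symm

end PrincipalValue

section EllipticIntegral

lemma continuousOn_ellipticK : ContinuousOn ellipticK (Set.Ioo (-1 : ℝ) 1) := by
  rw [continuousOn_iff_continuous_domRestrict]
  refine intervalIntegral.continuous_parametric_intervalIntegral_of_continuous'
    (f := fun (k : Set.Ioo (-1 : ℝ) 1) θ ↦ 1 / √(1 - (k : ℝ) ^ 2 * sin θ ^ 2)) ?_ 0 (π / 2)
  refine continuous_const.div₀ (by fun_prop) fun p ↦ (sqrt_pos.2 ?_).ne'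
  have hk : (p.1 : ℝ) ^ 2 < 1 := (sq_lt_one_iff_abs_lt_one _).2 (abs_lt.2 p.1.2)
  linarith [mul_le_of_le_one_right (sq_nonneg (p.1 : ℝ)) (sin_sq_le_one p.2)]

variable {a b x : ℝ}

lemma arcsineWeight_mul_inv_sqrt_const_sub (a b x s : ℝ) :
    arcsineWeight a b s * (√(x - s))⁻¹ = arcsineWeight a x s • (√(b - s))⁻¹ := by
  rw [arcsineWeight, arcsineWeight, smul_eq_mul]
  ring

lemma integrable_arcsineWeight_mul_inv_sqrt_const_sub (hxb : x < b) :
    Integrable fun s ↦ arcsineWeight a b s * (√(x - s))⁻¹ := by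
  simp only [arcsineWeight_mul_inv_sqrt_const_sub]
  exact integrable_arcsineWeight_smul <| ContinuousOn.inv₀ (by fun_prop) fun s hs ↦
    (sqrt_pos.2 (by linarith [hs.2])).ne'

lemma integrable_arcsineWeight_mul_inv_sqrt_sub_const (hax : a < x) :
    Integrable fun t ↦ arcsineWeight a b t * (√(t - x))⁻¹ := by
  have hreflect :=
    (integrable_arcsineWeight_mul_inv_sqrt_const_sub (a := -b) (neg_lt_neg hax)).comp_neg
  simpa only [← arcsineWeight_neg, neg_neg, sub_neg_eq_add, neg_add_eq_sub] using hreflect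

lemma leftAbelTransform_arcsineWeight (hab : a < b) (hax : a < x) :
    leftAbelTransform (arcsineWeight a b) x =
      2 / √(b - a) * ellipticK √((x - a) / (b - a)) := by
  have hsub : 0 < b - a := sub_pos.2 hab
  simp only [leftAbelTransform, arcsineWeight_mul_inv_sqrt_const_sub]
  rw [integral_arcsineWeight_smul hax, ellipticK, ← intervalIntegral.integral_const_mul]
  refine intervalIntegral.integral_congr fun θ _ ↦ ?_
  have hfactor : b - (a * cos θ ^ 2 + x * sin θ ^ 2) =
      (b - a) * (1 - (x - a) / (b - a) * sin θ ^ 2) := by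
    rw [cos_sq']
    field_simp
    ring
  simp only [hfactor, sqrt_mul hsub.le, sq_sqrt (div_nonneg (sub_nonneg.2 hax.le) hsub.le),
    smul_eq_mul]
  field_simp

lemma rightAbelTransform_eq_leftAbelTransform_neg (w : ℝ → ℝ) (x : ℝ) :
    rightAbelTransform w x = leftAbelTransform (fun s ↦ w (-s)) (-x) := by
  rw [rightAbelTransform, leftAbelTransform, ← integral_neg_eq_self]
  simp only [neg_sub_comm]

lemma rightAbelTransform_arcsineWeight (hab : a < b) (hxb : x < b) :
    rightAbelTransform (arcsineWeight a b) x =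
      2 / √(b - a) * ellipticK √((b - x) / (b - a)) := by
  simp only [rightAbelTransform_eq_leftAbelTransform_neg, arcsineWeight_neg]
  rw [leftAbelTransform_arcsineWeight (neg_lt_neg hab) (neg_lt_neg hxb), neg_sub_neg, neg_sub_neg]

lemma leftAbelTransform_arcsineWeight_of_le (hxa : x ≤ a) :
    leftAbelTransform (arcsineWeight a b) x = 0 := by
  simp only [leftAbelTransform, arcsineWeight_mul_inv_sqrt_const_sub,
    arcsineWeight_of_endpoints_le hxa, zero_smul, integral_zero]

lemma rightAbelTransform_arcsineWeight_of_le (hbx : b ≤ x) :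
    rightAbelTransform (arcsineWeight a b) x = 0 := by
  simp only [rightAbelTransform_eq_leftAbelTransform_neg, arcsineWeight_neg]
  exact leftAbelTransform_arcsineWeight_of_le (neg_le_neg hbx)

lemma leftAbelTransform_mul_rightAbelTransform_arcsineWeight_of_notMem (hx : x ∉ Set.Ioo a b) :
    leftAbelTransform (arcsineWeight a b) x * rightAbelTransform (arcsineWeight a b) x = 0 := by
  by_cases hax : a < x
  · rw [rightAbelTransform_arcsineWeight_of_le (not_lt.1 fun hxb ↦ hx ⟨hax, hxb⟩), mul_zero]
  · rw [leftAbelTransform_arcsineWeight_of_le (not_lt.1 hax), zero_mul]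

lemma sqrt_div_mem_Ioo {p q : ℝ} (hpq : p < q) (hq : 0 < q) : √(p / q) ∈ Set.Ioo (-1 : ℝ) 1 :=
  ⟨neg_one_lt_zero.trans_le (sqrt_nonneg _), by
    rw [sqrt_lt' one_pos, one_pow]
    exact (div_lt_one hq).2 hpq⟩

lemma continuousOn_leftAbelTransform_arcsineWeight :
    ContinuousOn (leftAbelTransform (arcsineWeight a b)) (Set.Ioo a b) := by
  intro x hx
  have hab := hx.1.trans hx.2
  have hK : ContinuousOn (fun x ↦ ellipticK √((x - a) / (b - a))) (Set.Ioo a b) :=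
    continuousOn_ellipticK.comp (by fun_prop) fun y hy ↦
      sqrt_div_mem_Ioo (sub_lt_sub_right hy.2 a) (sub_pos.2 hab)
  exact (hK.const_mul (2 / √(b - a))).congr
    (fun y hy ↦ leftAbelTransform_arcsineWeight hab hy.1) x hx

lemma continuousOn_rightAbelTransform_arcsineWeight :
    ContinuousOn (rightAbelTransform (arcsineWeight a b)) (Set.Ioo a b) := by
  have hreflect : ContinuousOn (leftAbelTransform fun s ↦ arcsineWeight a b (-s))
      (Set.Ioo (-b) (-a)) := by
    simpa only [arcsineWeight_neg] using continuousOn_leftAbelTransform_arcsineWeight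
  refine (hreflect.comp continuous_neg.continuousOn fun y hy ↦
    ⟨neg_lt_neg hy.2, neg_lt_neg hy.1⟩).congr fun y _ ↦ ?_
  rw [rightAbelTransform_eq_leftAbelTransform_neg]
  rfl

lemma continuousAt_leftAbelTransform_mul_rightAbelTransform_arcsineWeight (hx : x ∈ Set.Ioo a b) :
    ContinuousAt (fun ξ ↦ leftAbelTransform (arcsineWeight a b) ξ *
      rightAbelTransform (arcsineWeight a b) ξ) x :=
  (continuousOn_leftAbelTransform_arcsineWeight.mul
    continuousOn_rightAbelTransform_arcsineWeight).continuousAt (isOpen_Ioo.mem_nhds hx)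

lemma leftAbelTransform_arcsineWeight_neg_one_one (hx : -1 < x) :
    leftAbelTransform (arcsineWeight (-1) 1) x = √2 * ellipticK √((1 + x) / 2) := by
  rw [leftAbelTransform_arcsineWeight (by norm_num) hx, sub_neg_eq_add, sub_neg_eq_add,
    one_add_one_eq_two, div_sqrt, add_comm]

lemma rightAbelTransform_arcsineWeight_neg_one_one (hx : x < 1) :
    rightAbelTransform (arcsineWeight (-1) 1) x = √2 * ellipticK √((1 - x) / 2) := by
  rw [rightAbelTransform_arcsineWeight (by norm_num) hx, sub_neg_eq_add, one_add_one_eq_two,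
    div_sqrt]

lemma setIntegral_ellipticK_mul_ellipticK_eq (x ε : ℝ) :
    ∫ ξ in {ξ : ℝ | ξ ∈ Set.Ioo (-1 : ℝ) 1 ∧ ε < |ξ - x|},
        ellipticK √((1 + ξ) / 2) * ellipticK √((1 - ξ) / 2) * (2 / (π * (x - ξ))) =
      π⁻¹ * ∫ ξ in {ξ | ε < |ξ - x|}, leftAbelTransform (arcsineWeight (-1) 1) ξ *
        rightAbelTransform (arcsineWeight (-1) 1) ξ / (x - ξ) := by
  have htrunc : MeasurableSet {ξ | ε < |ξ - x|} := measurableSet_lt measurable_const (by fun_prop)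
  rw [setIntegral_eq_of_subset_of_forall_sdiff_eq_zero htrunc
    (s := {ξ : ℝ | ξ ∈ Set.Ioo (-1 : ℝ) 1 ∧ ε < |ξ - x|}) (fun ξ hξ ↦ hξ.2) fun ξ hξ ↦ ?_,
    ← MeasureTheory.integral_const_mul]
  · refine setIntegral_congr_fun (measurableSet_Ioo.inter htrunc) fun ξ hξ ↦ ?_
    have hsqrt : √2 * √2 = (2 : ℝ) := mul_self_sqrt zero_le_two
    simp only [leftAbelTransform_arcsineWeight_neg_one_one hξ.1.1,
      rightAbelTransform_arcsineWeight_neg_one_one hξ.1.2, mul_mul_mul_comm √2, hsqrt,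
      div_mul_eq_div_div]
    ring
  · rw [leftAbelTransform_mul_rightAbelTransform_arcsineWeight_of_notMem
      fun hmem ↦ hξ.2 ⟨hmem, hξ.1⟩, zero_div]

end EllipticIntegral

theorem stmt_15 (x : ℝ) (hx : x ∈ Set.Ioo (-1:ℝ) 1) :
    Tendsto (fun ε : ℝ =>
        ∫ ξ in {ξ : ℝ | ξ ∈ Set.Ioo (-1:ℝ) 1 ∧ ε < |ξ - x|},
          ellipticK (Real.sqrt ((1+ξ)/2)) * ellipticK (Real.sqrt ((1-ξ)/2))
            * (2 / (π * (x - ξ))))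
      (𝓝[>] 0)
      (𝓝 ((ellipticK (Real.sqrt ((1+x)/2)))^2 - (ellipticK (Real.sqrt ((1-x)/2)))^2)) := by
  have hlim := tendsto_integral_truncated_leftAbelTransform_mul_rightAbelTransform
    (integrable_arcsineWeight (-1) 1) (integrable_arcsineWeight_mul_inv_sqrt_const_sub hx.2)
    (integrable_arcsineWeight_mul_inv_sqrt_sub_const hx.1)
    (continuousAt_leftAbelTransform_mul_rightAbelTransform_arcsineWeight hx)
  rw [leftAbelTransform_arcsineWeight_neg_one_one hx.1,
    rightAbelTransform_arcsineWeight_neg_one_one hx.2, mul_pow, mul_pow,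
    sq_sqrt zero_le_two] at hlim
  simp only [setIntegral_ellipticK_mul_ellipticK_eq]
  convert hlim.const_mul π⁻¹ using 2
  field_simp
end
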